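/- Let k be a field, B = k[x,y], d ≥ 3, and g = (g₁,g₂,g₃) a triple of degree-d forms such that the ideal (g₁,g₂,g₃)B has height 2 and the inclusion A = k[g₁,g₂,g₃] ⊆ V (the d-th Veronese subring of B) is birational. Let c = A :_{Quot(A)} V be the conductor and L the preimage of c in T = k[T₁,T₂,T₃]. Then the homogeneous minimal free T-resolution of T/L has the form 0 → T^{d-2}(−d+1) → T^{d-1}(−d+2) → T → T/L → 0; in particular T/L is Cohen–Macaulay of dimension 1, and the canonical module ω_{T/L} is isomorphic to V/A. -/

import Mathlib

set_option maxHeartbeats 1000000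
set_option synthInstance.maxHeartbeats 1000000

open MvPolynomial

/-- The height of an ideal: the infimum of the heights of the primes containing it. -/
noncomputable def idealHeight {R : Type*} [CommRing R] (I : Ideal R) : ℕ∞ :=
  ⨅ (P : PrimeSpectrum R) (_ : I ≤ P.asIdeal), Order.height P

/-- The `d`-th Veronese subring `V = k[B_d]` of `B = k[x,y]`. -/
noncomputable def veronese (k : Type*) [Field k] (d : ℕ) :
    Subalgebra k (MvPolynomial (Fin 2) k) :=
  Algebra.adjoin k {f : MvPolynomial (Fin 2) k | f.IsHomogeneous d}

/-!
Write `T = k[T₁, T₂, T₃]` and let `v` be a basis of a complement of `⟨g₁, g₂, g₃⟩` in the forms of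
degree `d`. Since the `gᵢ` are two-variable forms without a common factor, every form of degree at
least `2d` is a combination of them, and their syzygies in high degree are Koszul. Hence `V/A` is
generated over `T` by `v`, and the relations between these generators follow from the linear ones.
Birationality makes the `gᵢ` linearly independent, so `v` has `d - 2` elements; counting dimensions
leaves exactly `d - 1` linear relations, and `V/A` is the cokernel of a `(d - 2) × (d - 1)` matrix
`P` of linear forms.

The rest is Hilbert–Burch. The annihilator of `V/A` contains the implicit equation of the curve and
a common denominator of `V`, which are coprime; therefore the maximal minors of `P` have no common
factor, they generate the annihilator `L`, and the transpose of `P` is their matrix of syzygies.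
-/

section RelPrime

/-- A family of ring elements without a common nonunit factor, the analogue of `IsRelPrime` for a
family of any size. The factor `0` is not excluded, so in a nontrivial ring some member is
nonzero. -/
def IsRelPrimeFamily {ι R : Type*} [CommRing R] (f : ι → R) : Prop :=
  ∀ p, (∀ i, p ∣ f i) → IsUnit p

variable {ι R : Type*} [CommRing R] {f : ι → R}

theorem IsRelPrimeFamily.exists_ne_zero [Nontrivial R] (hf : IsRelPrimeFamily f) :
    ∃ i, f i ≠ 0 := by
  by_contra! h
  exact not_isUnit_zero (hf 0 fun i => zero_dvd_iff.2 (h i))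

variable [IsDomain R] [UniqueFactorizationMonoid R]

theorem exists_isPrime_span_singleton_dvd {p : R} (hp : ¬IsUnit p) :
    ∃ q, (Ideal.span {q}).IsPrime ∧ q ∣ p := by
  rcases eq_or_ne p 0 with rfl | hp0
  · exact ⟨0, by simpa using Ideal.isPrime_bot, dvd_rfl⟩
  · obtain ⟨q, hq, hqp⟩ := WfDvdMonoid.exists_irreducible_factor hp hp0
    exact ⟨q, (Ideal.span_singleton_prime hq.ne_zero).2 hq.prime, hqp⟩

theorem IsRelPrimeFamily.dvd_of_forall_dvd_mul (hf : IsRelPrimeFamily f) {c s : R}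
    (h : ∀ i, c ∣ f i * s) : c ∣ s := by
  induction c using UniqueFactorizationMonoid.induction_on_prime generalizing s with
  | h₁ =>
    obtain ⟨i, hi⟩ := hf.exists_ne_zero
    exact zero_dvd_iff.2 ((mul_eq_zero.1 (zero_dvd_iff.1 (h i))).resolve_left hi)
  | h₂ x hx => exact hx.dvd
  | h₃ c p _ hp ih =>
    obtain ⟨i, hi⟩ : ∃ i, ¬p ∣ f i := by
      by_contra! hdvd
      exact hp.not_isUnit (hf p hdvd)
    obtain ⟨s, rfl⟩ := (hp.dvd_or_dvd ((dvd_mul_right p c).trans (h i))).resolve_left hi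
    refine mul_dvd_mul_left p (ih fun j => (mul_dvd_mul_iff_left hp.ne_zero).1 ?_)
    rw [← mul_left_comm]
    exact h j

theorem IsRelPrimeFamily.exists_eq_smul (hf : IsRelPrimeFamily f) {s : ι → R}
    (h : ∀ i j, f i * s j = f j * s i) : ∃ c : R, s = c • f := by
  obtain ⟨i, hi⟩ := hf.exists_ne_zero
  obtain ⟨c, hc⟩ : f i ∣ s i := hf.dvd_of_forall_dvd_mul fun j => ⟨s j, h j i⟩
  refine ⟨c, funext fun j => mul_left_cancel₀ hi ?_⟩
  rw [h i j, hc, Pi.smul_apply, smul_eq_mul]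
  ring

end RelPrime

section HilbertBurch

open Matrix

theorem mem_annihilator_quotient_range_mulVecLin_iff {R m n : Type*} [CommRing R] [Finite m]
    [DecidableEq m] [Fintype n] {P : Matrix m n R} {a : R} :
    a ∈ Module.annihilator R ((m → R) ⧸ LinearMap.range P.mulVecLin) ↔
      ∃ Q : Matrix n m R, P * Q = a • 1 := by
  cases nonempty_fintype m
  rw [Module.mem_annihilator, (Submodule.Quotient.mk_surjective _).forall]
  simp only [← Submodule.Quotient.mk_smul, Submodule.Quotient.mk_eq_zero, LinearMap.mem_range,
    mulVecLin_apply]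
  refine ⟨fun h => ?_, fun ⟨Q, hQ⟩ z => ⟨Q *ᵥ z, by simp [hQ, smul_mulVec]⟩⟩
  choose q hq using fun j => h (Pi.single j 1)
  refine ⟨(of q)ᵀ, ?_⟩
  ext i j
  have := congrFun (hq j) i
  simpa [mul_apply, mulVec, dotProduct, one_apply, Pi.single_apply] using this

variable {R : Type*} {n : ℕ}

/-- The matrix `P` with the row `r` added on top. -/
def consRow (r : Fin (n + 1) → R) (P : Matrix (Fin n) (Fin (n + 1)) R) :
    Matrix (Fin (n + 1)) (Fin (n + 1)) R :=
  of (vecCons r (of.symm P))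

theorem consRow_succ (r : Fin (n + 1) → R) (P : Matrix (Fin n) (Fin (n + 1)) R) (j : Fin n) :
    consRow r P j.succ = P j :=
  rfl

variable [CommRing R]

/-- The signed maximal minors `(-1) ^ i * det Pᵢ` of an `n × (n + 1)` matrix `P`, where `Pᵢ` is `P`
with column `i` deleted: the generators in the Hilbert–Burch theorem. -/
noncomputable def signedMinor (P : Matrix (Fin n) (Fin (n + 1)) R) (i : Fin (n + 1)) : R :=
  (-1) ^ (i : ℕ) * (P.submatrix id i.succAbove).det

theorem consRow_mulVec (r : Fin (n + 1) → R) (P : Matrix (Fin n) (Fin (n + 1)) R)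
    (u : Fin (n + 1) → R) : consRow r P *ᵥ u = vecCons (r ⬝ᵥ u) (P *ᵥ u) := by
  rw [consRow, cons_mulVec, Equiv.apply_symm_apply]

theorem vecMul_consRow (r : Fin (n + 1) → R) (P : Matrix (Fin n) (Fin (n + 1)) R)
    (v : Fin (n + 1) → R) : v ᵥ* consRow r P = vecHead v • r + vecTail v ᵥ* P := by
  rw [consRow, vecMul_cons, Equiv.apply_symm_apply]

theorem det_consRow (r : Fin (n + 1) → R) (P : Matrix (Fin n) (Fin (n + 1)) R) :
    (consRow r P).det = r ⬝ᵥ signedMinor P := by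
  rw [det_succ_row_zero]
  refine Finset.sum_congr rfl fun i _ => ?_
  rw [signedMinor, mul_left_comm, mul_assoc]
  rfl

theorem adjugate_consRow_apply_zero (r : Fin (n + 1) → R)
    (P : Matrix (Fin n) (Fin (n + 1)) R) (i : Fin (n + 1)) :
    (consRow r P).adjugate i 0 = signedMinor P i := by
  rw [adjugate_fin_succ_eq_det_submatrix, signedMinor, Fin.succAbove_zero, Fin.val_zero, zero_add]
  rfl

theorem mulVec_signedMinor (P : Matrix (Fin n) (Fin (n + 1)) R) : P *ᵥ signedMinor P = 0 := by
  ext j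
  have h := congrFun₂ (mul_adjugate (consRow 0 P)) j.succ 0
  simpa [mul_apply, adjugate_consRow_apply_zero, consRow_succ, mulVec, dotProduct] using h

variable {P : Matrix (Fin n) (Fin (n + 1)) R}

theorem signedMinor_mul_eq_of_mulVec_eq_zero {u : Fin (n + 1) → R} (hu : P *ᵥ u = 0)
    (i j : Fin (n + 1)) : signedMinor P i * u j = signedMinor P j * u i := by
  have h : (consRow (Pi.single i 1) P).adjugate *ᵥ (consRow (Pi.single i 1) P *ᵥ u) =
      signedMinor P i • u := by
    rw [mulVec_mulVec, adjugate_mul, det_consRow, single_one_dotProduct, smul_mulVec, one_mulVec]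
  have hu' : consRow (Pi.single i 1) P *ᵥ u = Pi.single 0 (u i) := by
    rw [consRow_mulVec, single_one_dotProduct, hu]
    exact funext (Fin.cases (by simp) fun _ => by simp)
  have hj := congrFun h j
  rw [hu', mulVec_single, Pi.smul_apply, col_apply, adjugate_consRow_apply_zero] at hj
  exact hj.symm

theorem signedMinor_mem_annihilator (P : Matrix (Fin n) (Fin (n + 1)) R) (i : Fin (n + 1)) :
    signedMinor P i ∈ Module.annihilator R ((Fin n → R) ⧸ LinearMap.range P.mulVecLin) := by
  have h := mul_adjugate (consRow (Pi.single i 1) P)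
  rw [det_consRow, single_one_dotProduct] at h
  refine mem_annihilator_quotient_range_mulVecLin_iff.2
    ⟨(consRow (Pi.single i 1) P).adjugate.submatrix id Fin.succ, ?_⟩
  ext j l
  simpa [mul_apply, consRow_succ, one_apply] using congrFun₂ h j.succ l.succ

theorem exists_transpose_mulVec_eq_smul {v : Fin (n + 1) → R} (hv : v ⬝ᵥ signedMinor P = 0)
    (i : Fin (n + 1)) : ∃ y, Pᵀ *ᵥ y = signedMinor P i • v := by
  set N := consRow (Pi.single i 1) P with hN
  have h : (v ᵥ* N.adjugate) ᵥ* N = signedMinor P i • v := by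
    rw [vecMul_vecMul, adjugate_mul, hN, det_consRow, single_one_dotProduct, vecMul_smul,
      vecMul_one]
  have h0 : vecHead (v ᵥ* N.adjugate) = 0 := by
    simpa only [vecMul, dotProduct, vecHead, N, adjugate_consRow_apply_zero] using hv
  refine ⟨vecTail (v ᵥ* N.adjugate), ?_⟩
  rw [← h, hN, vecMul_consRow, ← hN, h0, zero_smul, zero_add, mulVec_transpose]

theorem injective_transpose_mulVecLin [IsDomain R] {i : Fin (n + 1)} (hi : signedMinor P i ≠ 0) :
    Function.Injective Pᵀ.mulVecLin := by
  refine (injective_iff_map_eq_zero _).2 fun y hy => ?_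
  rw [mulVecLin_apply, mulVec_transpose] at hy
  have h : vecCons 0 y ᵥ* consRow (Pi.single i 1) P = 0 := by
    rw [vecMul_consRow, head_cons, tail_cons, zero_smul, zero_add, hy]
  have hy0 := eq_zero_of_vecMul_eq_zero (by rwa [det_consRow, single_one_dotProduct]) h
  exact (cons_eq_zero_iff.1 hy0).2

theorem mulVec_col_smul_one_sub_mul {Q : Matrix (Fin (n + 1)) (Fin n) R} {a : R}
    (hQ : P * Q = a • 1) (l : Fin (n + 1)) : P *ᵥ (a • 1 - Q * P).col l = 0 := by
  have h : P * (a • 1 - Q * P) = 0 := by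
    rw [Matrix.mul_sub, ← Matrix.mul_assoc, hQ, Matrix.mul_smul, Matrix.mul_one, Matrix.smul_mul,
      Matrix.one_mul, sub_self]
  exact funext fun j => congrFun₂ h j l

theorem trace_smul_one_sub_mul {Q : Matrix (Fin (n + 1)) (Fin n) R} {a : R}
    (hQ : P * Q = a • 1) : trace (a • 1 - Q * P) = a := by
  rw [trace_sub, trace_mul_comm, hQ, trace_smul, trace_smul, trace_one, trace_one]
  simp only [Fintype.card_fin, Nat.cast_add, Nat.cast_one, smul_eq_mul]
  ring

/-- `det (consRow eᵢ P * [u | Q]) = u i * a ^ n`. -/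
theorem mul_pow_mem_span_signedMinor {Q : Matrix (Fin (n + 1)) (Fin n) R} {a : R}
    (hQ : P * Q = a • 1) {u : Fin (n + 1) → R} (hu : P *ᵥ u = 0) (i : Fin (n + 1)) :
    u i * a ^ n ∈ Ideal.span (Set.range (signedMinor P)) := by
  set N := consRow (Pi.single i 1) P with hN
  set W : Matrix (Fin (n + 1)) (Fin (n + 1)) R := of fun l => vecCons (u l) (Q l)
  have hcol : (N * W).col 0 = vecCons (u i) 0 := by
    rw [← hu, ← single_one_dotProduct i u, ← consRow_mulVec]
    rfl
  have hblock : (N * W).submatrix Fin.succ Fin.succ = a • 1 := hQ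
  have hdet : (N * W).det = u i * a ^ n := by
    rw [det_succ_column_zero, Fin.sum_univ_succ, Finset.sum_eq_zero fun l _ => by
      rw [show (N * W) l.succ 0 = 0 from congrFun hcol l.succ, mul_zero, zero_mul],
      show (N * W) 0 0 = u i from congrFun hcol 0, Fin.succAbove_zero, hblock, det_smul, det_one]
    simp
  rw [← hdet, det_mul, hN, det_consRow, single_one_dotProduct]
  exact Ideal.mul_mem_right _ _ (Ideal.subset_span ⟨i, rfl⟩)

theorem annihilator_le_radical_span_signedMinor (P : Matrix (Fin n) (Fin (n + 1)) R) :
    Module.annihilator R ((Fin n → R) ⧸ LinearMap.range P.mulVecLin) ≤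
      (Ideal.span (Set.range (signedMinor P))).radical := by
  intro a ha
  obtain ⟨Q, hQ⟩ := mem_annihilator_quotient_range_mulVecLin_iff.1 ha
  refine ⟨n + 1, ?_⟩
  rw [pow_succ']
  nth_rw 1 [← trace_smul_one_sub_mul hQ]
  rw [trace, Finset.sum_mul]
  exact Ideal.sum_mem _ fun i _ =>
    mul_pow_mem_span_signedMinor hQ (mulVec_col_smul_one_sub_mul hQ i) i

variable [IsDomain R] [UniqueFactorizationMonoid R]

theorem isRelPrimeFamily_signedMinor
    (h : IsRelPrimeFamily fun a :
      Module.annihilator R ((Fin n → R) ⧸ LinearMap.range P.mulVecLin) => (a : R)) :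
    IsRelPrimeFamily (signedMinor P) := by
  intro p hp
  by_contra hpu
  obtain ⟨q, hq, hqp⟩ := exists_isPrime_span_singleton_dvd hpu
  have hspan : Ideal.span (Set.range (signedMinor P)) ≤ Ideal.span {q} := by
    rw [Ideal.span_le]
    rintro _ ⟨i, rfl⟩
    exact Ideal.mem_span_singleton.2 (hqp.trans (hp i))
  refine hq.ne_top (Ideal.span_singleton_eq_top.2 (h q fun a => Ideal.mem_span_singleton.1 ?_))
  exact hq.radical_le_iff.2 hspan (annihilator_le_radical_span_signedMinor P a.2)

theorem exists_eq_smul_signedMinor (hP : IsRelPrimeFamily (signedMinor P)) {u : Fin (n + 1) → R}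
    (hu : P *ᵥ u = 0) : ∃ c : R, u = c • signedMinor P :=
  hP.exists_eq_smul fun i j => signedMinor_mul_eq_of_mulVec_eq_zero hu i j

theorem exists_transpose_mulVec_eq (hP : IsRelPrimeFamily (signedMinor P)) {v : Fin (n + 1) → R}
    (hv : v ⬝ᵥ signedMinor P = 0) : ∃ y, Pᵀ *ᵥ y = v := by
  obtain ⟨i, hi⟩ := hP.exists_ne_zero
  have hinj := injective_transpose_mulVecLin hi
  choose Y hY using exists_transpose_mulVec_eq_smul hv
  have hcross (l m : Fin (n + 1)) : signedMinor P l • Y m = signedMinor P m • Y l := by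
    apply hinj
    rw [mulVecLin_apply, mulVecLin_apply, mulVec_smul, mulVec_smul, hY, hY, smul_comm]
  choose y hy using fun j => hP.exists_eq_smul fun l m => congrFun (hcross l m) j
  refine ⟨y, smul_right_injective _ hi ?_⟩
  have hYi : signedMinor P i • y = Y i :=
    funext fun j => ((congrFun (hy j) i).trans (mul_comm _ _)).symm
  exact (mulVec_smul _ _ _).symm.trans (hYi ▸ hY i)

theorem range_transpose_mulVecLin_eq_ker (hP : IsRelPrimeFamily (signedMinor P)) :
    LinearMap.range Pᵀ.mulVecLin =
      LinearMap.ker (mulVecLin (of fun (_ : Fin 1) i => signedMinor P i)) := by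
  have hker (v : Fin (n + 1) → R) :
      v ∈ LinearMap.ker (mulVecLin (of fun (_ : Fin 1) i => signedMinor P i)) ↔
        v ⬝ᵥ signedMinor P = 0 := by
    rw [LinearMap.mem_ker, mulVecLin_apply, funext_iff, Fin.forall_fin_one, dotProduct_comm]
    rfl
  ext v
  rw [hker]
  refine ⟨?_, exists_transpose_mulVec_eq hP⟩
  rintro ⟨y, rfl⟩
  rw [mulVecLin_apply, mulVec_transpose, ← dotProduct_mulVec, mulVec_signedMinor,
    dotProduct_zero]

theorem annihilator_eq_span_signedMinor (hP : IsRelPrimeFamily (signedMinor P)) :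
    Module.annihilator R ((Fin n → R) ⧸ LinearMap.range P.mulVecLin) =
      Ideal.span (Set.range (signedMinor P)) := by
  refine le_antisymm (fun a ha => ?_) (Ideal.span_le.2 ?_)
  · obtain ⟨Q, hQ⟩ := mem_annihilator_quotient_range_mulVecLin_iff.1 ha
    choose s hs using fun l => exists_eq_smul_signedMinor hP (mulVec_col_smul_one_sub_mul hQ l)
    rw [← trace_smul_one_sub_mul hQ]
    refine Ideal.sum_mem _ fun l _ => ?_
    rw [show diag (a • 1 - Q * P) l = s l * signedMinor P l from congrFun (hs l) l]
    exact Ideal.mul_mem_left _ _ (Ideal.subset_span ⟨l, rfl⟩)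
  · rintro _ ⟨i, rfl⟩
    exact signedMinor_mem_annihilator P i

end HilbertBurch

section DimensionDepth

variable {R : Type*} [CommRing R] {I L : Ideal R}

theorem ringKrullDim_quotient_add_two_le [IsDomain R] {f y : R} (hf : Prime f) (hfL : f ∈ L)
    (hyL : y ∈ L) (hfy : ¬f ∣ y) : ringKrullDim (R ⧸ L) + 2 ≤ ringKrullDim R := by
  have : (Ideal.span {f}).IsPrime := (Ideal.span_singleton_prime hf.ne_zero).2 hf
  have hfL' : Ideal.span {f} ≤ L := (Ideal.span_singleton_le_iff_mem _).2 hfL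
  set y' := Ideal.Quotient.mk (Ideal.span {f}) y
  have hy' : y' ≠ 0 := by
    rwa [Ne, Ideal.Quotient.eq_zero_iff_mem, Ideal.mem_span_singleton]
  let φ : (R ⧸ Ideal.span {f}) ⧸ Ideal.span {y'} →+* R ⧸ L :=
    Ideal.Quotient.lift _ (Ideal.Quotient.factor hfL') fun a ha => by
      obtain ⟨b, rfl⟩ := Ideal.mem_span_singleton.1 ha
      rw [map_mul, Ideal.Quotient.factor_mk, Ideal.Quotient.eq_zero_iff_mem.2 hyL, zero_mul]
  have hφ : Function.Surjective φ :=
    Ideal.Quotient.lift_surjective_of_surjective _ _ (Ideal.Quotient.factor_surjective hfL')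
  calc ringKrullDim (R ⧸ L) + 2
      = ringKrullDim (R ⧸ L) + 1 + 1 := by rw [add_assoc, one_add_one_eq_two]
    _ ≤ ringKrullDim ((R ⧸ Ideal.span {f}) ⧸ Ideal.span {y'}) + 1 + 1 := by
      gcongr
      exact ringKrullDim_le_of_surjective φ hφ
    _ ≤ ringKrullDim (R ⧸ Ideal.span {f}) + 1 := by
      gcongr
      exact ringKrullDim_quotient_succ_le_of_nonZeroDivisor (mem_nonZeroDivisors_of_ne_zero hy')
    _ ≤ ringKrullDim R :=
      ringKrullDim_quotient_succ_le_of_nonZeroDivisor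
        (mem_nonZeroDivisors_of_ne_zero hf.ne_zero)

theorem one_le_ringKrullDim_quotient (hI : I ≠ ⊤) (hLI : L ≤ I) {t : R} (ht : t ∈ I)
    (htL : Ideal.Quotient.mk L t ∈ nonZeroDivisors (R ⧸ L)) : 1 ≤ ringKrullDim (R ⧸ L) := by
  have hspan : Ideal.span {Ideal.Quotient.mk L t} ≤ I.map (Ideal.Quotient.mk L) :=
    (Ideal.span_singleton_le_iff_mem _).2 (Ideal.mem_map_of_mem _ ht)
  have hmap : I.map (Ideal.Quotient.mk L) ≠ ⊤ := fun h => hI <| by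
    rw [← Ideal.comap_map_quotientMk L I |>.trans (sup_eq_right.2 hLI), h, Ideal.comap_top]
  have : Nontrivial ((R ⧸ L) ⧸ Ideal.span {Ideal.Quotient.mk L t}) :=
    Ideal.Quotient.nontrivial_iff.2 (ne_top_of_le_ne_top hmap hspan)
  calc (1 : WithBot ℕ∞) = 0 + 1 := (zero_add 1).symm
    _ ≤ ringKrullDim ((R ⧸ L) ⧸ Ideal.span {Ideal.Quotient.mk L t}) + 1 := by
      gcongr
      exact ringKrullDim_nonneg_of_nontrivial
    _ ≤ ringKrullDim (R ⧸ L) := ringKrullDim_quotient_succ_le_of_nonZeroDivisor htL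

theorem exists_mem_mk_mem_nonZeroDivisors [IsNoetherianRing R]
    (h : ∀ a, (∀ x ∈ I, x * a ∈ L) → a ∈ L) :
    ∃ t ∈ I, Ideal.Quotient.mk L t ∈ nonZeroDivisors (R ⧸ L) := by
  by_contra! hI
  have hdisj : Disjoint ((I.map (Ideal.Quotient.mk L) : Ideal (R ⧸ L)) : Set (R ⧸ L))
      (nonZeroDivisors (R ⧸ L)) := by
    refine Set.disjoint_left.2 fun q hq => ?_
    obtain ⟨t, ht, rfl⟩ := (Ideal.mem_map_iff_of_surjective _ Ideal.Quotient.mk_surjective).1 hq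
    exact hI t ht
  refine (Ideal.bot_lt_annihilator_of_disjoint_nonZeroDivisors hdisj).ne' (eq_bot_iff.2 ?_)
  intro q hq
  obtain ⟨a, rfl⟩ := Ideal.Quotient.mk_surjective q
  refine Ideal.Quotient.eq_zero_iff_mem.2 (h a fun x hx => ?_)
  have := Submodule.mem_annihilator.1 hq _ (Ideal.mem_map_of_mem _ hx)
  rwa [smul_eq_mul, ← map_mul, Ideal.Quotient.eq_zero_iff_mem, mul_comm] at this

end DimensionDepth

section Koszul

open Matrix

variable {R : Type*} [CommRing R] [IsDomain R]

theorem X_dvd_of_X_mul_eq {σ : Type*} {i j : σ} (hij : i ≠ j) {a b : MvPolynomial σ R}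
    (h : X j * a = X i * b) : X i ∣ a :=
  (MvPolynomial.X_prime.dvd_or_dvd ⟨b, h⟩).resolve_left fun hdvd => hij (X_dvd_X.1 hdvd)

theorem mem_span_X_image_of_X_mul_mem {R σ : Type*} [CommSemiring R] {s : Set σ} {i : σ}
    (hi : i ∉ s) {a : MvPolynomial σ R} (h : X i * a ∈ Ideal.span (X '' s)) :
    a ∈ Ideal.span (X '' s) := by
  rw [mem_ideal_span_X_image] at h ⊢
  intro m hm
  obtain ⟨j, hj, hne⟩ := h (m + Finsupp.single i 1) (by
    rwa [mem_support_iff, mul_comm, coeff_mul_X, ← mem_support_iff])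
  have hij : i ≠ j := ne_of_mem_of_not_mem hj hi |>.symm
  exact ⟨j, hj, by simpa [Finsupp.single_apply, hij] using hne⟩

/-- Exactness in the middle of the Koszul complex on three variables, indices being cyclic. -/
theorem exists_koszul_of_sum_X_mul_eq_zero {c : Fin 3 → MvPolynomial (Fin 3) R}
    (h : ∑ i, X i * c i = 0) :
    ∃ b : Fin 3 → MvPolynomial (Fin 3) R,
      ∀ i, c i = X (i + 1) * b (i + 2) - X (i + 2) * b (i + 1) := by
  rw [Fin.sum_univ_three] at h
  have hc1 : c 1 ∈ Ideal.span (X '' {0, 2}) := by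
    refine mem_span_X_image_of_X_mul_mem (i := 1) (by decide) ?_
    rw [Set.image_pair, Ideal.mem_span_pair]
    exact ⟨-c 0, -c 2, by linear_combination -h⟩
  rw [Set.image_pair, Ideal.mem_span_pair] at hc1
  obtain ⟨s, t, hst⟩ := hc1
  have hr : X 0 * (c 0 + X 1 * s) = X 2 * -(c 2 + X 1 * t) := by
    linear_combination h + X 1 * hst
  obtain ⟨r, hr0⟩ := X_dvd_of_X_mul_eq (by decide) hr
  have hr2 : -(c 2 + X 1 * t) = X 0 * r :=
    mul_left_cancel₀ (X_ne_zero 2) (by rw [← hr, hr0]; ring)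
  refine ⟨![t, -r, -s], Fin.forall_fin_succ.2 ⟨?_, Fin.forall_fin_two.2 ⟨?_, ?_⟩⟩⟩
  · change c 0 = X 1 * -s - X 2 * -r
    linear_combination hr0
  · change c 1 = X 2 * t - X 0 * -s
    linear_combination -hst
  · change c 2 = X 0 * -r - X 1 * t
    linear_combination -hr2

variable [UniqueFactorizationMonoid R] {n : ℕ}
  {P : Matrix (Fin n) (Fin (n + 1)) (MvPolynomial (Fin 3) R)}

/-- Lifts `u i` of `X i • z` through `P` differ from a compatible family `X i • w` by multiples of
the minors, by exactness of the Koszul complex. -/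
theorem mem_range_of_X_smul_mem_range (hP : IsRelPrimeFamily (signedMinor P))
    {z : Fin n → MvPolynomial (Fin 3) R}
    (hz : ∀ i : Fin 3, (X i : MvPolynomial (Fin 3) R) • z ∈ LinearMap.range P.mulVecLin) :
    z ∈ LinearMap.range P.mulVecLin := by
  obtain ⟨l₀, hl₀⟩ := hP.exists_ne_zero
  choose u hu using hz
  simp only [mulVecLin_apply] at hu
  have hcross (i j : Fin 3) : ∃ c : MvPolynomial (Fin 3) R,
      (X j : MvPolynomial (Fin 3) R) • u i - (X i : MvPolynomial (Fin 3) R) • u j =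
        c • signedMinor P :=
    exists_eq_smul_signedMinor hP (by
      rw [mulVec_sub, mulVec_smul, mulVec_smul, hu, hu, smul_comm, sub_self])
  choose c hc using hcross
  have hc (i j : Fin 3) (l : Fin (n + 1)) :
      X j * u i l - X i * u j l = c i j * signedMinor P l := congrFun (hc i j) l
  obtain ⟨b, hb⟩ := exists_koszul_of_sum_X_mul_eq_zero
    (c := fun i => c (i + 1) (i + 2)) (mul_right_cancel₀ hl₀ (by
      rw [Finset.sum_mul, Fin.sum_univ_three]
      simp only [mul_assoc, ← hc]
      simp only [Fin.reduceAdd]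
      ring))
  have hb₀₁ : c 0 1 = X 0 * b 1 - X 1 * b 0 := hb 2
  have hdvd (l : Fin (n + 1)) : X 0 ∣ u 0 l + b 0 * signedMinor P l := by
    refine X_dvd_of_X_mul_eq (j := 1) (b := u 1 l + b 1 * signedMinor P l) (by decide) ?_
    linear_combination hc 0 1 l + signedMinor P l * hb₀₁
  choose w hw using hdvd
  refine ⟨w, smul_right_injective _ (X_ne_zero (R := R) (0 : Fin 3)) ?_⟩
  have hXw : (X 0 : MvPolynomial (Fin 3) R) • w = u 0 + b 0 • signedMinor P :=
    funext fun l => (hw l).symm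
  calc (X 0 : MvPolynomial (Fin 3) R) • P *ᵥ w = P *ᵥ ((X 0 : MvPolynomial (Fin 3) R) • w) :=
        (mulVec_smul _ _ _).symm
    _ = (X 0 : MvPolynomial (Fin 3) R) • z := by
        rw [hXw, mulVec_add, mulVec_smul, mulVec_signedMinor, hu, smul_zero, add_zero]

theorem mem_annihilator_of_X_mul_mem (hP : IsRelPrimeFamily (signedMinor P))
    {a : MvPolynomial (Fin 3) R}
    (ha : ∀ i, X i * a ∈ Module.annihilator (MvPolynomial (Fin 3) R)
      ((Fin n → MvPolynomial (Fin 3) R) ⧸ LinearMap.range P.mulVecLin)) :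
    a ∈ Module.annihilator (MvPolynomial (Fin 3) R)
      ((Fin n → MvPolynomial (Fin 3) R) ⧸ LinearMap.range P.mulVecLin) := by
  simp only [Module.mem_annihilator, (Submodule.Quotient.mk_surjective _).forall,
    ← Submodule.Quotient.mk_smul, Submodule.Quotient.mk_eq_zero, mul_smul] at ha ⊢
  exact fun z => mem_range_of_X_smul_mem_range hP fun i => ha i z

end Koszul

section Homogeneous

variable {σ R : Type*} [CommRing R] {m n d : ℕ} {p q : MvPolynomial σ R}

/-- The substitution `Xᵢ ↦ Xᵢ t`, which sends `p` to `∑ pₙ tⁿ` with `pₙ` the homogeneous components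
of `p`. It turns statements about degrees of forms into statements about one variable. -/
noncomputable def gradingHom (σ R : Type*) [CommRing R] :
    MvPolynomial σ R →ₐ[R] Polynomial (MvPolynomial σ R) :=
  aeval fun i => Polynomial.C (X i) * Polynomial.X

theorem gradingHom_monomial (s : σ →₀ ℕ) (r : R) :
    gradingHom σ R (monomial s r) = Polynomial.C (monomial s r) * Polynomial.X ^ s.degree := by
  rw [gradingHom, aeval_monomial, monomial_eq, Finsupp.prod, Finsupp.prod, map_mul, map_prod,
    mul_assoc, Finsupp.degree_apply, ← Finset.prod_pow_eq_pow_sum, ← Finset.prod_mul_distrib]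
  simp only [mul_pow, map_pow]
  rfl

theorem coeff_gradingHom (p : MvPolynomial σ R) (n : ℕ) :
    (gradingHom σ R p).coeff n = homogeneousComponent n p := by
  induction p using MvPolynomial.induction_on' with
  | monomial s r =>
    rw [gradingHom_monomial, Polynomial.coeff_C_mul_X_pow,
      homogeneousComponent_of_mem (isHomogeneous_monomial r rfl)]
  | add p q hp hq => rw [map_add, Polynomial.coeff_add, hp, hq, map_add]

theorem gradingHom_of_isHomogeneous (hp : p.IsHomogeneous d) :
    gradingHom σ R p = Polynomial.C p * Polynomial.X ^ d := by
  ext1 n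
  rw [coeff_gradingHom, Polynomial.coeff_C_mul_X_pow, homogeneousComponent_of_mem hp]

theorem isHomogeneous_of_gradingHom_natDegree_le
    (h : (gradingHom σ R p).natDegree ≤ (gradingHom σ R p).natTrailingDegree) :
    p.IsHomogeneous (gradingHom σ R p).natDegree := by
  intro s hs
  have hs' : (gradingHom σ R p).coeff s.degree ≠ 0 := fun h0 => hs <| by
    rw [coeff_gradingHom] at h0
    simpa [coeff_homogeneousComponent] using congrArg (coeff s) h0
  rw [Pi.one_def, ← Finsupp.degree_eq_weight_one]
  exact le_antisymm (Polynomial.le_natDegree_of_ne_zero hs')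
    (h.trans (Polynomial.natTrailingDegree_le_of_ne_zero hs'))

theorem homogeneousComponent_add_mul (hp : p.IsHomogeneous d) (m : ℕ) (q : MvPolynomial σ R) :
    homogeneousComponent (m + d) (p * q) = p * homogeneousComponent m q := by
  rw [← coeff_gradingHom, map_mul, gradingHom_of_isHomogeneous hp, mul_assoc,
    Polynomial.coeff_C_mul, Polynomial.coeff_X_pow_mul, coeff_gradingHom]

theorem isHomogeneous_of_mul [IsDomain R] (hp : p.IsHomogeneous m) (hp0 : p ≠ 0)
    (hpq : (p * q).IsHomogeneous (n + m)) : q.IsHomogeneous n := by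
  have h := homogeneousComponent_add_mul hp n q
  rw [homogeneousComponent_of_mem hpq, if_pos rfl] at h
  rw [mul_left_cancel₀ hp0 h]
  exact homogeneousComponent_isHomogeneous n q

theorem exists_isHomogeneous_of_mul [IsDomain R] (hpq : (p * q).IsHomogeneous d)
    (h0 : p * q ≠ 0) : ∃ m n, m + n = d ∧ p.IsHomogeneous m ∧ q.IsHomogeneous n := by
  have hmul : gradingHom σ R p * gradingHom σ R q = Polynomial.C (p * q) * Polynomial.X ^ d := by
    rw [← map_mul, gradingHom_of_isHomogeneous hpq]
  have hne : gradingHom σ R p * gradingHom σ R q ≠ 0 := by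
    rw [hmul]
    exact mul_ne_zero (Polynomial.C_ne_zero.2 h0) (pow_ne_zero _ Polynomial.X_ne_zero)
  have hdeg := congrArg Polynomial.natDegree hmul
  have htrail := congrArg Polynomial.natTrailingDegree hmul
  rw [Polynomial.natDegree_mul (left_ne_zero_of_mul hne) (right_ne_zero_of_mul hne),
    Polynomial.natDegree_C_mul_X_pow _ _ h0] at hdeg
  rw [Polynomial.natTrailingDegree_mul (left_ne_zero_of_mul hne) (right_ne_zero_of_mul hne),
    Polynomial.C_mul_X_pow_eq_monomial, Polynomial.natTrailingDegree_monomial h0] at htrail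
  have hp := (gradingHom σ R p).natTrailingDegree_le_natDegree
  have hq := (gradingHom σ R q).natTrailingDegree_le_natDegree
  exact ⟨_, _, hdeg, isHomogeneous_of_gradingHom_natDegree_le (by omega),
    isHomogeneous_of_gradingHom_natDegree_le (by omega)⟩

theorem finrank_homogeneousSubmodule (σ R : Type*) [Fintype σ] [CommRing R] [Nontrivial R]
    (e : ℕ) :
    Module.finrank R (homogeneousSubmodule σ R e) = (Fintype.card σ).multichoose e := by
  classical
  have h : homogeneousSubmodule σ R e =
      restrictSupport R ((Finset.univ.finsuppAntidiag e : Finset (σ →₀ ℕ)) : Set (σ →₀ ℕ)) := by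
    rw [homogeneousSubmodule_eq_finsupp_supported, restrictSupport]
    congr 1
    ext s
    simp [Finsupp.degree_eq_sum]
  rw [h, Module.finrank_eq_card_basis (basisRestrictSupport R _)]
  simp [Finset.card_finsuppAntidiag_nat_eq_multichoose]

instance finite_homogeneousSubmodule (σ R : Type*) [Finite σ] [CommRing R] (e : ℕ) :
    Module.Finite R (homogeneousSubmodule σ R e) :=
  Module.Finite.iff_fg.2 (homogeneousSubmodule_fg σ R e)

/-- Multiplication by a form `p`, as a map between spaces of forms. -/
noncomputable def formMul (hp : p.IsHomogeneous d) (h : d + m = n) :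
    homogeneousSubmodule σ R m →ₗ[R] homogeneousSubmodule σ R n :=
  (LinearMap.mulLeft R p).restrict fun _ hq => h ▸ hp.mul hq

theorem exists_isHomogeneous_of_mul_add_mul_eq_zero [IsDomain R] [UniqueFactorizationMonoid R]
    {a b : MvPolynomial σ R} {c : ℕ} (hpq : IsRelPrime p q) (hp : p.IsHomogeneous m)
    (hq : q.IsHomogeneous n) (ha : a.IsHomogeneous (c + n)) (hb : b.IsHomogeneous (c + m))
    (h : p * a + q * b = 0) :
    ∃ w : MvPolynomial σ R, w.IsHomogeneous c ∧ a = q * w ∧ b = -(p * w) := by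
  have hfam : IsRelPrimeFamily ![q, p] := fun r hr => hpq (hr 1) (hr 0)
  obtain ⟨w, hw⟩ := hfam.exists_eq_smul (s := ![a, -b]) <| by
    simp only [Fin.forall_fin_two, Matrix.cons_val_zero, Matrix.cons_val_one, true_and, and_true]
    exact ⟨by linear_combination -h, by linear_combination h⟩
  have haw : a = q * w := (congrFun hw 0).trans (mul_comm _ _)
  have hbw : -b = p * w := (congrFun hw 1).trans (mul_comm _ _)
  refine ⟨homogeneousComponent c w, homogeneousComponent_isHomogeneous _ _, ?_, ?_⟩
  · rw [← homogeneousComponent_add_mul hq, ← haw, homogeneousComponent_of_mem ha, if_pos rfl]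
  · rw [← homogeneousComponent_add_mul hp, ← hbw, map_neg, neg_neg,
      homogeneousComponent_of_mem hb, if_pos rfl]

theorem exists_isHomogeneous_reduced_factors [IsDomain R] [UniqueFactorizationMonoid R]
    (hp : p.IsHomogeneous d) (hq : q.IsHomogeneous d) :
    ∃ m n e a b, m + n = d ∧ IsHomogeneous e m ∧ IsHomogeneous a n ∧ IsHomogeneous b n ∧
      IsRelPrime a b ∧ p = e * a ∧ q = e * b := by
  rcases eq_or_ne p 0 with rfl | hp0
  · exact ⟨d, 0, q, 0, 1, add_zero d, hq, isHomogeneous_zero _ _ _, isHomogeneous_one _ _,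
      isRelPrime_one_right, (mul_zero q).symm, (mul_one q).symm⟩
  · obtain ⟨a, b, e, hab, rfl, rfl⟩ :=
      UniqueFactorizationMonoid.exists_reduced_factors p hp0 q
    obtain ⟨m, n, rfl, he, ha⟩ := exists_isHomogeneous_of_mul hp hp0
    rw [add_comm] at hq
    exact ⟨m, n, e, a, b, rfl, he, ha, isHomogeneous_of_mul he (left_ne_zero_of_mul hp0) hq, hab,
      rfl, rfl⟩

end Homogeneous

section TwoVariables

variable {k : Type*} [Field k] {p q f : MvPolynomial (Fin 2) k} {c m n : ℕ}

theorem finrank_homogeneousSubmodule_fin_two (e : ℕ) :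
    Module.finrank k (homogeneousSubmodule (Fin 2) k e) = e + 1 := by
  rw [finrank_homogeneousSubmodule, Fintype.card_fin, Nat.multichoose_two]

theorem exists_eq_mul_add_mul (hpq : IsRelPrime p q) (hp : p.IsHomogeneous m)
    (hq : q.IsHomogeneous n) (hf : f.IsHomogeneous (c + m + n)) :
    ∃ a b : MvPolynomial (Fin 2) k, a.IsHomogeneous (c + n) ∧ b.IsHomogeneous (c + m) ∧
      f = p * a + q * b := by
  let Φ : homogeneousSubmodule (Fin 2) k (c + n) × homogeneousSubmodule (Fin 2) k (c + m) →ₗ[k]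
      homogeneousSubmodule (Fin 2) k (c + m + n) :=
    (formMul hp (by ring)).coprod (formMul hq (by ring))
  let Ψ : homogeneousSubmodule (Fin 2) k c →ₗ[k]
      homogeneousSubmodule (Fin 2) k (c + n) × homogeneousSubmodule (Fin 2) k (c + m) :=
    (formMul hq (by ring)).prod (-formMul hp (by ring))
  have hker : LinearMap.ker Φ ≤ LinearMap.range Ψ := by
    rintro ⟨a, b⟩ hab
    obtain ⟨w, hw, ha, hb⟩ := exists_isHomogeneous_of_mul_add_mul_eq_zero hpq hp hq a.2 b.2
      (congrArg Subtype.val hab)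
    exact ⟨⟨w, hw⟩, Prod.ext (Subtype.ext ha.symm) (Subtype.ext hb.symm)⟩
  have hsurj : LinearMap.range Φ = ⊤ := by
    refine Submodule.eq_top_of_finrank_eq (le_antisymm (Submodule.finrank_le _) ?_)
    have hrank := LinearMap.finrank_range_add_finrank_ker Φ
    have hker := (Submodule.finrank_mono hker).trans (LinearMap.finrank_range_le Ψ)
    simp only [Module.finrank_prod, finrank_homogeneousSubmodule_fin_two] at hrank hker ⊢
    omega
  obtain ⟨⟨a, b⟩, hab⟩ := LinearMap.range_eq_top.1 hsurj ⟨f, hf⟩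
  exact ⟨a, b, a.2, b.2, (congrArg Subtype.val hab).symm⟩

variable {g : Fin 3 → MvPolynomial (Fin 2) k} {d : ℕ}

theorem IsRelPrimeFamily.exists_isHomogeneous_reduced_factors (hrel : IsRelPrimeFamily g)
    (hg : ∀ i, (g i).IsHomogeneous d) :
    ∃ m n e a b, m + n = d ∧ IsHomogeneous e m ∧ IsHomogeneous a n ∧ IsHomogeneous b n ∧
      IsRelPrime a b ∧ IsRelPrime e (g 2) ∧ g 0 = e * a ∧ g 1 = e * b := by
  obtain ⟨m, n, e, a, b, hd, he, ha, hb, hab, h0, h1⟩ :=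
    _root_.exists_isHomogeneous_reduced_factors (hg 0) (hg 1)
  refine ⟨m, n, e, a, b, hd, he, ha, hb, hab, fun p hpe hp2 => hrel p ?_, h0, h1⟩
  rw [Fin.forall_fin_succ, Fin.forall_fin_two, h0]
  exact ⟨hpe.mul_right a, h1 ▸ hpe.mul_right b, hp2⟩

theorem exists_eq_sum_mul (hg : ∀ i, (g i).IsHomogeneous d) (hrel : IsRelPrimeFamily g)
    (hf : f.IsHomogeneous (c + d + d)) :
    ∃ t : Fin 3 → MvPolynomial (Fin 2) k,
      (∀ i, (t i).IsHomogeneous (c + d)) ∧ f = ∑ i, g i * t i := by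
  obtain ⟨m, n, e, a, b, rfl, he, ha, hb, hab, he2, h0, h1⟩ :=
    hrel.exists_isHomogeneous_reduced_factors hg
  obtain ⟨s, t, hs, ht, rfl⟩ := exists_eq_mul_add_mul (c := c + n) he2 he (hg 2)
    ((by ring : c + (m + n) + (m + n) = c + n + m + (m + n)) ▸ hf)
  obtain ⟨p, q, hp, hq, rfl⟩ := exists_eq_mul_add_mul (c := c + m) hab ha hb
    ((by ring : c + n + (m + n) = c + m + n + n) ▸ hs)
  rw [add_assoc] at hp hq
  rw [add_right_comm, add_assoc] at ht
  refine ⟨![p, q, t], Fin.forall_fin_succ.2 ⟨hp, Fin.forall_fin_two.2 ⟨hq, ht⟩⟩, ?_⟩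
  rw [Fin.sum_univ_three, h0, h1]
  simp only [Matrix.cons_val]
  ring

theorem exists_of_mul_add_mul_eq_mul {a b h s u v : MvPolynomial (Fin 2) k}
    (hab : IsRelPrime a b) (ha : a.IsHomogeneous n) (hb : b.IsHomogeneous n)
    (hh : h.IsHomogeneous m) (hs : s.IsHomogeneous (c + n + n))
    (hu : u.IsHomogeneous (c + n + m)) (hv : v.IsHomogeneous (c + n + m))
    (heq : a * u + b * v = h * s) :
    ∃ p q r : MvPolynomial (Fin 2) k, p.IsHomogeneous (c + n) ∧ q.IsHomogeneous (c + n) ∧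
      r.IsHomogeneous (c + m) ∧ s = a * p + b * q ∧ u = h * p + b * r ∧ v = h * q - a * r := by
  obtain ⟨p, q, hp, hq, rfl⟩ := exists_eq_mul_add_mul hab ha hb hs
  have hsub {x y} (hx : IsHomogeneous x (c + n + m)) (hy : IsHomogeneous y (c + n)) :
      (x - h * y).IsHomogeneous (c + m + n) :=
    add_right_comm c n m ▸ hx.sub (add_comm m (c + n) ▸ hh.mul hy)
  obtain ⟨r, hr, hur, hvr⟩ := exists_isHomogeneous_of_mul_add_mul_eq_zero hab ha hb (hsub hu hp)
    (hsub hv hq) (by linear_combination heq)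
  exact ⟨p, q, r, hp, hq, hr, rfl, by linear_combination hur, by linear_combination hvr⟩

/-- Exactness in the middle of the Koszul complex of `g`, indices being cyclic. -/
theorem exists_koszul_of_sum_mul_eq_zero (hg : ∀ i, (g i).IsHomogeneous d)
    (hrel : IsRelPrimeFamily g) {u : Fin 3 → MvPolynomial (Fin 2) k}
    (hu : ∀ i, (u i).IsHomogeneous (c + d + d)) (h : ∑ i, g i * u i = 0) :
    ∃ w : Fin 3 → MvPolynomial (Fin 2) k, (∀ i, (w i).IsHomogeneous (c + d)) ∧
      ∀ i, u i = g (i + 1) * w (i + 2) - g (i + 2) * w (i + 1) := by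
  obtain ⟨m, n, e, a, b, rfl, he, ha, hb, hab, he2, h0, h1⟩ :=
    hrel.exists_isHomogeneous_reduced_factors hg
  rw [Fin.sum_univ_three, h0, h1] at h
  have hab_u : (a * u 0 + b * u 1).IsHomogeneous (c + m + n + n + (m + n)) :=
    (by ring : n + (c + (m + n) + (m + n)) = c + m + n + n + (m + n)) ▸
      (ha.mul (hu 0)).add (hb.mul (hu 1))
  obtain ⟨s, hs, hus, hu2⟩ := exists_isHomogeneous_of_mul_add_mul_eq_zero (c := c + m + n + n)
    he2 he (hg 2) hab_u ((by ring : c + (m + n) + (m + n) = c + m + n + n + m) ▸ hu 2)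
    (by linear_combination h)
  obtain ⟨p, q, r, hp, hq, hr, rfl, hu0, hu1⟩ := exists_of_mul_add_mul_eq_mul (c := c + m) hab ha
    hb (hg 2) hs (add_assoc c m n ▸ hu 0) (add_assoc c m n ▸ hu 1) hus
  obtain ⟨w, t, hw, ht, rfl⟩ := exists_eq_mul_add_mul he2 he (hg 2) hr
  rw [add_assoc] at hp hq
  have hw0 : (q - a * t).IsHomogeneous (c + (m + n)) :=
    hq.sub ((by ring : n + (c + m) = c + (m + n)) ▸ ha.mul ht)
  have hw1 : (-(p + b * t)).IsHomogeneous (c + (m + n)) :=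
    (hp.add ((by ring : n + (c + m) = c + (m + n)) ▸ hb.mul ht)).neg
  refine ⟨![q - a * t, -(p + b * t), w],
    Fin.forall_fin_succ.2 ⟨hw0, Fin.forall_fin_two.2 ⟨hw1, hw⟩⟩,
    Fin.forall_fin_succ.2 ⟨?_, Fin.forall_fin_two.2 ⟨?_, ?_⟩⟩⟩
  · change u 0 = g 1 * w - g 2 * -(p + b * t)
    linear_combination hu0 - w * h1
  · change u 1 = g 2 * (q - a * t) - g 0 * w
    linear_combination hu1 + w * h0
  · change u 2 = g 0 * -(p + b * t) - g 1 * (q - a * t)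
    linear_combination hu2 + (p + b * t) * h0 + (q - a * t) * h1

end TwoVariables

section HomogeneousComponents

variable {σ τ R : Type*} [CommRing R] {d m : ℕ}

theorem homogeneousComponent_aeval {g : τ → MvPolynomial σ R} (hg : ∀ i, (g i).IsHomogeneous d)
    (hd : d ≠ 0) (p : MvPolynomial τ R) (m : ℕ) :
    homogeneousComponent (d * m) (aeval g p) = aeval g (homogeneousComponent m p) := by
  induction p using MvPolynomial.induction_on' with
  | monomial s r =>
    have hs : (monomial s r).IsHomogeneous s.degree := isHomogeneous_monomial r rfl
    rw [homogeneousComponent_of_mem hs, homogeneousComponent_of_mem (hs.aeval g hg), apply_ite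
      (aeval g), map_zero]
    exact if_congr (Nat.mul_right_inj hd) rfl rfl
  | add p q hp hq => simp only [map_add, hp, hq]

theorem exists_eq_sum_X_mul [Fintype τ] {p : MvPolynomial τ R} (hp : p.IsHomogeneous (m + 1)) :
    ∃ q : τ → MvPolynomial τ R, (∀ i, (q i).IsHomogeneous m) ∧ p = ∑ i, X i * q i := by
  have hmem : p ∈ Ideal.span (Set.range (X : τ → MvPolynomial τ R)) := by
    rw [← pow_one (Ideal.span _), mem_pow_idealOfVars_iff]
    intro s hs
    have := hp (mem_support_iff.1 hs)
    rw [Pi.one_def, ← Finsupp.degree_eq_weight_one] at this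
    omega
  obtain ⟨c, rfl⟩ := Ideal.mem_span_range_iff_exists_fun.1 hmem
  refine ⟨fun i => homogeneousComponent m (c i),
    fun i => homogeneousComponent_isHomogeneous m (c i), ?_⟩
  conv_lhs => rw [← homogeneousComponent_of_mem hp |>.trans (if_pos rfl), map_sum]
  exact Finset.sum_congr rfl fun i _ => by
    rw [mul_comm, homogeneousComponent_add_mul (isHomogeneous_X R i)]

end HomogeneousComponents

section Generators

variable {k σ ι τ : Type*} [Field k] {d m : ℕ}

variable (k ι τ) in
/-- The graded pieces of the source of `generatorMap g v` when the `g i` and the `v j` have the same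
degree: the generators `v j` sit in degree `1`, so `m` here is the degree minus `1`. -/
noncomputable def generatorForms (m : ℕ) :
    Submodule k ((ι → MvPolynomial τ k) × MvPolynomial τ k) :=
  (Submodule.pi Set.univ fun _ => homogeneousSubmodule τ k m).prod
    (homogeneousSubmodule τ k (m + 1))

variable {x : (ι → MvPolynomial τ k) × MvPolynomial τ k}

theorem mem_generatorForms :
    x ∈ generatorForms k ι τ m ↔
      (∀ j, (x.1 j).IsHomogeneous m) ∧ x.2.IsHomogeneous (m + 1) := by
  simp [generatorForms, Submodule.mem_prod, Submodule.mem_pi]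

theorem X_smul_mem_generatorForms (hx : x ∈ generatorForms k ι τ m) (i : τ) :
    (X i : MvPolynomial τ k) • x ∈ generatorForms k ι τ (m + 1) := by
  rw [mem_generatorForms] at hx ⊢
  simp only [add_comm _ 1] at hx ⊢
  exact ⟨fun j => (isHomogeneous_X k i).mul (hx.1 j), (isHomogeneous_X k i).mul hx.2⟩

theorem exists_eq_sum_X_smul [Fintype τ] (hx : x ∈ generatorForms k ι τ (m + 1)) :
    ∃ y : τ → (ι → MvPolynomial τ k) × MvPolynomial τ k,
      (∀ i, y i ∈ generatorForms k ι τ m) ∧ x = ∑ i, (X i : MvPolynomial τ k) • y i := by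
  obtain ⟨hp, hq⟩ := mem_generatorForms.1 hx
  choose p hp hxp using fun j => exists_eq_sum_X_mul (hp j)
  obtain ⟨q, hq, hxq⟩ := exists_eq_sum_X_mul hq
  refine ⟨fun i => (fun j => p j i, q i), fun i => mem_generatorForms.2 ⟨fun j => hp j i, hq i⟩,
    Prod.ext (funext fun j => ?_) ?_⟩
  · simpa [Prod.fst_sum] using hxp j
  · simpa [Prod.snd_sum] using hxq

variable [Fintype ι]

theorem finrank_generatorForms [Fintype τ] (m : ℕ) :
    Module.finrank k (generatorForms k ι τ m) =
      Fintype.card ι * (Fintype.card τ).multichoose m + (Fintype.card τ).multichoose (m + 1) := by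
  let φ : (ι → homogeneousSubmodule τ k m) × homogeneousSubmodule τ k (m + 1) →ₗ[k]
      (ι → MvPolynomial τ k) × MvPolynomial τ k :=
    ((homogeneousSubmodule τ k m).subtype.compLeft ι).prodMap (homogeneousSubmodule τ k _).subtype
  have hφ : Function.Injective φ :=
    Function.Injective.prodMap (Function.Injective.comp_left Subtype.val_injective)
      Subtype.val_injective
  have hrange : LinearMap.range φ = generatorForms k ι τ m := by
    ext x
    rw [mem_generatorForms]
    constructor
    · rintro ⟨y, rfl⟩
      exact ⟨fun j => (y.1 j).2, y.2.2⟩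
    · exact fun hx => ⟨(fun j => ⟨x.1 j, hx.1 j⟩, ⟨x.2, hx.2⟩), rfl⟩
  rw [← hrange, LinearMap.finrank_range_of_inj hφ, Module.finrank_prod, Module.finrank_pi_fintype]
  simp [finrank_homogeneousSubmodule]

/-- The map `(p, q) ↦ ∑ⱼ p j(g) v j + q(g)`, which presents the `k[g]`-module generated by `1` and
the `v j`. -/
noncomputable def generatorMap (g : τ → MvPolynomial σ k) (v : ι → MvPolynomial σ k) :
    (ι → MvPolynomial τ k) × MvPolynomial τ k →ₗ[k] MvPolynomial σ k :=
  LinearMap.coprod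
    (∑ j, LinearMap.mulRight k (v j) ∘ₗ (aeval g).toLinearMap ∘ₗ LinearMap.proj j)
    (aeval g).toLinearMap

variable {g : τ → MvPolynomial σ k} {v : ι → MvPolynomial σ k}

theorem generatorMap_apply (x : (ι → MvPolynomial τ k) × MvPolynomial τ k) :
    generatorMap g v x = ∑ j, aeval g (x.1 j) * v j + aeval g x.2 := by
  simp [generatorMap, LinearMap.sum_apply]

theorem generatorMap_smul (t : MvPolynomial τ k)
    (x : (ι → MvPolynomial τ k) × MvPolynomial τ k) :
    generatorMap g v (t • x) = aeval g t * generatorMap g v x := by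
  simp only [generatorMap_apply, Prod.smul_fst, Prod.smul_snd, Pi.smul_apply, smul_eq_mul, map_mul,
    mul_add, Finset.mul_sum, mul_assoc]

theorem isHomogeneous_generatorMap (hg : ∀ i, (g i).IsHomogeneous d)
    (hv : ∀ j, (v j).IsHomogeneous d) (hx : x ∈ generatorForms k ι τ m) :
    (generatorMap g v x).IsHomogeneous (d * (m + 1)) := by
  obtain ⟨hp, hq⟩ := mem_generatorForms.1 hx
  rw [generatorMap_apply]
  exact (IsHomogeneous.sum _ _ _ fun j _ => ((hp j).aeval g hg).mul (hv j)).add (hq.aeval g hg)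

theorem homogeneousComponent_generatorMap (hg : ∀ i, (g i).IsHomogeneous d)
    (hv : ∀ j, (v j).IsHomogeneous d) (hd : d ≠ 0) (m : ℕ)
    (x : (ι → MvPolynomial τ k) × MvPolynomial τ k) :
    homogeneousComponent (d * (m + 1)) (generatorMap g v x) =
      generatorMap g v
        (fun j => homogeneousComponent m (x.1 j), homogeneousComponent (m + 1) x.2) := by
  have hv' (j) (p : MvPolynomial σ k) :
      homogeneousComponent (d * (m + 1)) (p * v j) = homogeneousComponent (d * m) p * v j := by
    rw [mul_add_one, mul_comm p, homogeneousComponent_add_mul (hv j), mul_comm]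
  simp only [generatorMap_apply, map_add, map_sum, hv', homogeneousComponent_aeval hg hd]

end Generators

section LinearSyzygies

variable {k ι : Type*} [Field k] {g : Fin 3 → MvPolynomial (Fin 2) k}
  {v : ι → MvPolynomial (Fin 2) k} {d : ℕ}
  {x : (ι → MvPolynomial (Fin 3) k) × MvPolynomial (Fin 3) k}

theorem isHomogeneous_of_span_eq
    (hspan : Submodule.span k (Set.range (Sum.elim v g)) = homogeneousSubmodule (Fin 2) k d)
    (i : ι ⊕ Fin 3) : (Sum.elim v g i).IsHomogeneous d :=
  (mem_homogeneousSubmodule _ _).1 (hspan ▸ Submodule.subset_span ⟨i, rfl⟩)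

variable [Fintype ι]

theorem map_generatorMap_generatorForms (hrel : IsRelPrimeFamily g)
    (hspan : Submodule.span k (Set.range (Sum.elim v g)) = homogeneousSubmodule (Fin 2) k d)
    (m : ℕ) :
    (generatorForms k ι (Fin 3) m).map (generatorMap g v) =
      homogeneousSubmodule (Fin 2) k (d * (m + 1)) := by
  have hg (i) : (g i).IsHomogeneous d := isHomogeneous_of_span_eq hspan (.inr i)
  have hv (j) : (v j).IsHomogeneous d := isHomogeneous_of_span_eq hspan (.inl j)
  refine le_antisymm ?_ fun f hf => ?_
  · rintro _ ⟨x, hx, rfl⟩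
    exact isHomogeneous_generatorMap hg hv hx
  induction m generalizing f with
  | zero =>
    rw [zero_add, mul_one, ← hspan, Submodule.mem_span_range_iff_exists_fun] at hf
    obtain ⟨c, rfl⟩ := hf
    refine ⟨(fun j => C (c (.inl j)), ∑ i, C (c (.inr i)) * X i), mem_generatorForms.2
      ⟨fun j => isHomogeneous_C _ _, IsHomogeneous.sum _ _ _ fun i _ => ?_⟩, ?_⟩
    · simpa using (isHomogeneous_C (Fin 3) (c (.inr i))).mul (isHomogeneous_X k i)
    · simp [generatorMap_apply, Algebra.smul_def]
  | succ m ih =>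
    obtain ⟨t, ht, rfl⟩ := exists_eq_sum_mul hg hrel (c := d * m) hf
    choose y hy hyt using fun i => ih (t i) (ht i)
    refine ⟨∑ i, (X i : MvPolynomial (Fin 3) k) • y i,
      Submodule.sum_mem _ fun i _ => X_smul_mem_generatorForms (hy i) i, ?_⟩
    simp only [map_sum, generatorMap_smul, aeval_X, hyt]

theorem eq_zero_of_generatorMap_eq_zero (hli : LinearIndependent k (Sum.elim v g))
    (hx : x ∈ generatorForms k ι (Fin 3) 0) (h : generatorMap g v x = 0) : x = 0 := by
  obtain ⟨hp, hq⟩ := mem_generatorForms.1 hx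
  have hC {q : MvPolynomial (Fin 3) k} (hq : q.IsHomogeneous 0) : ∃ c, q = C c :=
    ⟨_, totalDegree_eq_zero_iff_eq_C.1 ((totalDegree_zero_iff_isHomogeneous _).2 hq)⟩
  choose c hc using fun j => hC (hp j)
  obtain ⟨q, hq, hxq⟩ := exists_eq_sum_X_mul hq
  choose c' hc' using fun i => hC (hq i)
  have hsum : ∑ i, Sum.elim c c' i • Sum.elim v g i = 0 := by
    rw [generatorMap_apply, hxq] at h
    simpa [hc, hc', Algebra.smul_def, mul_comm] using h
  have h0 := Fintype.linearIndependent_iff.1 hli _ hsum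
  have hc0 (j) : c j = 0 := h0 (.inl j)
  have hc0' (i) : c' i = 0 := h0 (.inr i)
  refine Prod.ext (funext fun j => ?_) ?_
  · simp [hc, hc0]
  · simp [hxq, hc', hc0']

variable (g v) in
/-- The linear syzygies of the `v j` modulo `k[g]`, each together with the quadratic form in `g`
that it produces. -/
noncomputable def linearSyzygies :
    Submodule k ((ι → MvPolynomial (Fin 3) k) × MvPolynomial (Fin 3) k) :=
  generatorForms k ι (Fin 3) 1 ⊓ LinearMap.ker (generatorMap g v)

theorem mem_span_linearSyzygies_of_mem_generatorForms (hrel : IsRelPrimeFamily g)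
    (hspan : Submodule.span k (Set.range (Sum.elim v g)) = homogeneousSubmodule (Fin 2) k d)
    (hli : LinearIndependent k (Sum.elim v g)) {m : ℕ} (hx : x ∈ generatorForms k ι (Fin 3) m)
    (h : generatorMap g v x = 0) :
    x ∈ Submodule.span (MvPolynomial (Fin 3) k)
      (SetLike.coe (linearSyzygies g v)) := by
  induction m generalizing x with
  | zero =>
    rw [eq_zero_of_generatorMap_eq_zero hli hx h]
    exact zero_mem _
  | succ m ih =>
    rcases m with _ | m
    · exact Submodule.subset_span ⟨hx, h⟩
    have hmap := map_generatorMap_generatorForms hrel hspan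
    have hg (i) : (g i).IsHomogeneous d := isHomogeneous_of_span_eq hspan (.inr i)
    have hv (j) : (v j).IsHomogeneous d := isHomogeneous_of_span_eq hspan (.inl j)
    obtain ⟨y, hy, rfl⟩ := exists_eq_sum_X_smul hx
    simp only [map_sum, generatorMap_smul, aeval_X] at h
    obtain ⟨w, hw, hyw⟩ := exists_koszul_of_sum_mul_eq_zero (c := d * m) hg hrel
      (fun i => isHomogeneous_generatorMap hg hv (hy i)) h
    choose z hz hzw using fun i =>
      (hmap m).ge ((mem_homogeneousSubmodule (d * (m + 1)) (w i)).2 (hw i))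
    let y' (i : Fin 3) := y i - ((X (i + 1) : MvPolynomial (Fin 3) k) • z (i + 2) -
      (X (i + 2) : MvPolynomial (Fin 3) k) • z (i + 1))
    have hy' (i) : y' i ∈ generatorForms k ι (Fin 3) (m + 1) :=
      sub_mem (hy i) (sub_mem (X_smul_mem_generatorForms (hz _) _)
        (X_smul_mem_generatorForms (hz _) _))
    have hy'0 (i) : generatorMap g v (y' i) = 0 := by
      simp only [y', map_sub, generatorMap_smul, aeval_X, hzw, hyw, sub_self]
    have hsum : ∑ i, (X i : MvPolynomial (Fin 3) k) • y i =
        ∑ i, (X i : MvPolynomial (Fin 3) k) • y' i := by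
      simp only [Fin.sum_univ_three, y', Fin.reduceAdd, smul_sub, smul_smul]
      module
    rw [hsum]
    exact Submodule.sum_mem _ fun i _ => Submodule.smul_mem _ _ (ih (hy' i) (hy'0 i))

theorem fst_mem_span_linearSyzygies (hrel : IsRelPrimeFamily g)
    (hspan : Submodule.span k (Set.range (Sum.elim v g)) = homogeneousSubmodule (Fin 2) k d)
    (hli : LinearIndependent k (Sum.elim v g)) (hd : d ≠ 0) (h : generatorMap g v x = 0) :
    x.1 ∈ Submodule.span (MvPolynomial (Fin 3) k)
      (Prod.fst '' SetLike.coe (linearSyzygies g v)) := by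
  have hg (i) : (g i).IsHomogeneous d := isHomogeneous_of_span_eq hspan (.inr i)
  have hv (j) : (v j).IsHomogeneous d := isHomogeneous_of_span_eq hspan (.inl j)
  let part (m : ℕ) : (ι → MvPolynomial (Fin 3) k) × MvPolynomial (Fin 3) k :=
    (fun j => homogeneousComponent m (x.1 j), homogeneousComponent (m + 1) x.2)
  have hpart (m) : part m ∈ Submodule.span (MvPolynomial (Fin 3) k)
      (SetLike.coe (linearSyzygies g v)) := by
    refine mem_span_linearSyzygies_of_mem_generatorForms hrel hspan hli (m := m)
      (mem_generatorForms.2 ⟨fun j => homogeneousComponent_isHomogeneous m _,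
        homogeneousComponent_isHomogeneous (m + 1) _⟩) ?_
    rw [← homogeneousComponent_generatorMap hg hv hd, h, map_zero]
  obtain ⟨N, hN⟩ := Finite.bddAbove_range fun j => (x.1 j).totalDegree
  have hsum : x.1 = ∑ m ∈ Finset.range (N + 1), (part m).1 := by
    ext1 j
    rw [Finset.sum_apply]
    conv_lhs => rw [← sum_homogeneousComponent (x.1 j)]
    refine Finset.sum_subset (Finset.range_mono (Nat.succ_le_succ (hN ⟨j, rfl⟩))) fun m _ hm => ?_
    exact homogeneousComponent_eq_zero _ _ (by simpa using hm)
  rw [hsum]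
  exact Submodule.sum_mem _ fun m _ =>
    Submodule.image_span_subset_span (LinearMap.fst _ _ _) _ ⟨_, hpart m, rfl⟩

theorem finrank_linearSyzygies (hrel : IsRelPrimeFamily g)
    (hspan : Submodule.span k (Set.range (Sum.elim v g)) = homogeneousSubmodule (Fin 2) k d) :
    Module.finrank k (linearSyzygies g v) + (2 * d + 1) = 3 * Fintype.card ι + 6 := by
  let φ := (generatorMap g v).domRestrict (generatorForms k ι (Fin 3) 1)
  have hsource : Module.finrank k (generatorForms k ι (Fin 3) 1) = 3 * Fintype.card ι + 6 := by
    rw [finrank_generatorForms]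
    simp [mul_comm, Nat.multichoose]
  have : Module.Finite k (generatorForms k ι (Fin 3) 1) :=
    Module.finite_of_finrank_pos (by omega)
  have hrange : Module.finrank k (LinearMap.range φ) = 2 * d + 1 := by
    rw [LinearMap.range_domRestrict, map_generatorMap_generatorForms hrel hspan,
      finrank_homogeneousSubmodule_fin_two, mul_comm]
  have hker : Module.finrank k (LinearMap.ker φ) = Module.finrank k (linearSyzygies g v) := by
    rw [LinearMap.ker_domRestrict, linearSyzygies, ← Submodule.map_comap_subtype]
    exact (Submodule.equivSubtypeMap _ _).finrank_eq
  have := LinearMap.finrank_range_add_finrank_ker φ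
  omega

theorem exists_matrix_mem_range_mulVecLin_iff {n : ℕ} {v : Fin n → MvPolynomial (Fin 2) k}
    (hrel : IsRelPrimeFamily g)
    (hspan : Submodule.span k (Set.range (Sum.elim v g)) = homogeneousSubmodule (Fin 2) k (n + 2))
    (hli : LinearIndependent k (Sum.elim v g)) :
    ∃ P : Matrix (Fin n) (Fin (n + 1)) (MvPolynomial (Fin 3) k),
      (∀ i j, (P i j).IsHomogeneous 1) ∧
      ∀ p, p ∈ LinearMap.range P.mulVecLin ↔ ∃ q, generatorMap g v (p, q) = 0 := by
  have hrank : Module.finrank k (linearSyzygies g v) = n + 1 := by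
    have := finrank_linearSyzygies hrel hspan
    rw [Fintype.card_fin] at this
    omega
  have : Module.Finite k (linearSyzygies g v) := Module.finite_of_finrank_eq_succ hrank
  let b := Module.finBasisOfFinrankEq k (linearSyzygies g v) hrank
  let P : Matrix (Fin n) (Fin (n + 1)) (MvPolynomial (Fin 3) k) := Matrix.of fun j l => (b l).1.1 j
  have hP (u) : P.mulVecLin u = (∑ l, u l • (b l).1).1 := by
    ext1 j
    simp [P, Matrix.mulVec, dotProduct, Prod.fst_sum, mul_comm]
  refine ⟨P, fun j l => (mem_generatorForms.1 (b l).2.1).1 j, fun p => ⟨?_, ?_⟩⟩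
  · rintro ⟨u, rfl⟩
    refine ⟨(∑ l, u l • (b l).1).2, ?_⟩
    have hb (l) : generatorMap g v (b l).1 = 0 := (b l).2.2
    rw [hP, Prod.mk.eta, map_sum]
    simp only [generatorMap_smul, hb, mul_zero, Finset.sum_const_zero]
  · rintro ⟨q, h⟩
    refine Submodule.span_le.2 ?_ (fst_mem_span_linearSyzygies hrel hspan hli (by omega) h)
    rintro _ ⟨x, hx, rfl⟩
    refine ⟨fun l => C (b.repr ⟨x, hx⟩ l), ?_⟩
    rw [hP]
    congr 1
    conv_rhs => rw [← Subtype.coe_mk x hx, ← b.sum_repr ⟨x, hx⟩]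
    simp only [← algebraMap_eq, algebraMap_smul, AddSubmonoidClass.coe_finsetSum,
      Submodule.coe_smul]

end LinearSyzygies

section Height

theorem isRelPrimeFamily_of_one_lt_idealHeight {ι R : Type*} [CommRing R] [IsDomain R]
    [UniqueFactorizationMonoid R] [IsNoetherianRing R] {f : ι → R}
    (hf : 1 < idealHeight (Ideal.span (Set.range f))) : IsRelPrimeFamily f := by
  intro p hp
  by_contra hpu
  obtain ⟨q, hq, hqp⟩ := exists_isPrime_span_singleton_dvd hpu
  have hle : Ideal.span (Set.range f) ≤ Ideal.span {q} := by
    rw [Ideal.span_le]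
    rintro _ ⟨i, rfl⟩
    exact Ideal.mem_span_singleton.2 (hqp.trans (hp i))
  have hheight : Order.height (⟨Ideal.span {q}, hq⟩ : PrimeSpectrum R) ≤ 1 :=
    (PrimeSpectrum.height_eq_orderHeight _).symm.trans_le
      (Ideal.height_span_singleton_le_one fun h => hq.ne_top (Ideal.span_singleton_eq_top.2 h))
  have hinf : idealHeight (Ideal.span (Set.range f)) ≤
      Order.height (⟨Ideal.span {q}, hq⟩ : PrimeSpectrum R) :=
    iInf₂_le (⟨Ideal.span {q}, hq⟩ : PrimeSpectrum R) hle
  exact hf.not_ge (hinf.trans hheight)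

end Height

section LinearMatrix

open Matrix

theorem isHomogeneous_det {σ R m : Type*} [CommRing R] [Fintype m] [DecidableEq m]
    {A : Matrix m m (MvPolynomial σ R)} (hA : ∀ i j, (A i j).IsHomogeneous 1) :
    A.det.IsHomogeneous (Fintype.card m) := by
  rw [det_apply]
  refine IsHomogeneous.sum _ _ _ fun s _ => ?_
  have hprod : (∏ i, A (s i) i).IsHomogeneous (Fintype.card m) := by
    simpa using IsHomogeneous.prod Finset.univ (fun i => A (s i) i) (fun _ => 1) fun i _ => hA _ _
  obtain hs | hs := Int.units_eq_one_or (Equiv.Perm.sign s) <;> simp only [hs]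
  · simpa using hprod
  · simpa using hprod.neg

variable {n : ℕ}

theorem isHomogeneous_signedMinor {σ R : Type*} [CommRing R]
    {P : Matrix (Fin n) (Fin (n + 1)) (MvPolynomial σ R)} (hP : ∀ i j, (P i j).IsHomogeneous 1)
    (i : Fin (n + 1)) : (signedMinor P i).IsHomogeneous n := by
  have hdet := isHomogeneous_det (A := P.submatrix id i.succAbove) fun _ _ => hP _ _
  rw [Fintype.card_fin] at hdet
  obtain hi | hi := neg_one_pow_eq_or (MvPolynomial σ R) (i : ℕ)
  · simpa [signedMinor, hi] using hdet
  · simpa [signedMinor, hi] using hdet.neg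

variable {k : Type*} [Field k] {P : Matrix (Fin n) (Fin (n + 1)) (MvPolynomial (Fin 3) k)}

theorem exists_mem_span_range_X_mk_mem_nonZeroDivisors
    (hP : IsRelPrimeFamily (signedMinor P)) :
    ∃ t ∈ Ideal.span (Set.range (X : Fin 3 → MvPolynomial (Fin 3) k)),
      Ideal.Quotient.mk (Module.annihilator (MvPolynomial (Fin 3) k)
        ((Fin n → MvPolynomial (Fin 3) k) ⧸ LinearMap.range P.mulVecLin)) t ∈ nonZeroDivisors _ :=
  exists_mem_mk_mem_nonZeroDivisors fun _ ha =>
    mem_annihilator_of_X_mul_mem hP fun i => ha _ (Ideal.subset_span ⟨i, rfl⟩)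

theorem ringKrullDim_quotient_annihilator_eq_one (hn : n ≠ 0)
    (hlin : ∀ i j, (P i j).IsHomogeneous 1) (hP : IsRelPrimeFamily (signedMinor P))
    {f y : MvPolynomial (Fin 3) k} (hf : Prime f)
    (hfL : f ∈ Module.annihilator (MvPolynomial (Fin 3) k)
      ((Fin n → MvPolynomial (Fin 3) k) ⧸ LinearMap.range P.mulVecLin))
    (hyL : y ∈ Module.annihilator (MvPolynomial (Fin 3) k)
      ((Fin n → MvPolynomial (Fin 3) k) ⧸ LinearMap.range P.mulVecLin))
    (hfy : ¬f ∣ y) :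
    ringKrullDim (MvPolynomial (Fin 3) k ⧸ Module.annihilator (MvPolynomial (Fin 3) k)
      ((Fin n → MvPolynomial (Fin 3) k) ⧸ LinearMap.range P.mulVecLin)) = 1 := by
  obtain ⟨t, ht, htL⟩ := exists_mem_span_range_X_mk_mem_nonZeroDivisors hP
  refine le_antisymm ?_ (one_le_ringKrullDim_quotient ?_ ?_ ht htL)
  · have := ringKrullDim_quotient_add_two_le hf hfL hyL hfy
    rw [ringKrullDim_of_isNoetherianRing, ringKrullDim_eq_zero_of_field, zero_add, Nat.card_fin,
      show ((3 : ℕ) : WithBot ℕ∞) = 1 + (2 : ℕ) by norm_num] at this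
    exact ENat.WithBot.add_le_add_natCast_right_iff.1 this
  · rw [Ideal.ne_top_iff_one, ← pow_one (Ideal.span _), ← C_1]
    exact (C_mem_pow_idealOfVars_iff 1 (1 : k)).not.2 (by simp)
  · rw [annihilator_eq_span_signedMinor hP, Ideal.span_le]
    rintro _ ⟨i, rfl⟩
    obtain ⟨m, rfl⟩ := Nat.exists_eq_succ_of_ne_zero hn
    obtain ⟨q, -, hq⟩ := exists_eq_sum_X_mul (isHomogeneous_signedMinor hlin i)
    exact hq ▸ Ideal.sum_mem _ fun j _ => Ideal.mul_mem_right _ _ (Ideal.subset_span ⟨j, rfl⟩)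

end LinearMatrix

theorem exists_prime_aeval_eq_zero {k σ τ : Type*} [Field k] [Finite σ] [Finite τ]
    (h : Nat.card σ < Nat.card τ) (g : τ → MvPolynomial σ k) :
    ∃ f : MvPolynomial τ k, Prime f ∧ aeval g f = 0 := by
  have hker : RingHom.ker (aeval g) ≠ ⊥ := fun hbot => by
    have hg : AlgebraicIndependent k g := (RingHom.injective_iff_ker_eq_bot _).2 hbot
    have := Fintype.ofFinite σ
    have := Fintype.ofFinite τ
    have hcard := hg.lift_cardinalMk_le_trdeg
    rw [MvPolynomial.trdeg_of_isDomain] at hcard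
    simp only [Cardinal.mk_fintype, Cardinal.lift_natCast, Nat.cast_le] at hcard
    rw [Nat.card_eq_fintype_card, Nat.card_eq_fintype_card] at h
    exact h.not_ge hcard
  obtain ⟨f, hf, hf'⟩ := (RingHom.ker_isPrime _).exists_mem_prime_of_ne_bot hker
  exact ⟨f, hf', hf⟩

section Birational

variable {k ι : Type*} [Field k] {g : Fin 3 → MvPolynomial (Fin 2) k} {d : ℕ}
  {v : ι → MvPolynomial (Fin 2) k} [Fintype ι]

theorem mem_range_generatorMap_of_mem_veronese (hrel : IsRelPrimeFamily g)
    (hspan : Submodule.span k (Set.range (Sum.elim v g)) = homogeneousSubmodule (Fin 2) k d)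
    {f : MvPolynomial (Fin 2) k} (hf : f ∈ veronese k d) :
    f ∈ LinearMap.range (generatorMap g v) := by
  have hclosure : ∀ f ∈ Submonoid.closure {f : MvPolynomial (Fin 2) k | f.IsHomogeneous d},
      ∃ m, f.IsHomogeneous (d * m) := by
    intro f hf
    induction hf using Submonoid.closure_induction with
    | mem f hf => exact ⟨1, by simpa using hf⟩
    | one => exact ⟨0, isHomogeneous_one _ _⟩
    | mul f f' _ _ hf hf' =>
      obtain ⟨⟨m, hm⟩, m', hm'⟩ := And.intro hf hf'
      exact ⟨m + m', mul_add d m m' ▸ hm.mul hm'⟩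
  rw [veronese, ← Subalgebra.mem_toSubmodule, Algebra.adjoin_eq_span] at hf
  refine Submodule.span_le.2 (fun f hf => ?_) hf
  obtain ⟨_ | m, hm⟩ := hclosure f hf
  · refine ⟨(0, C (coeff 0 f)), ?_⟩
    rw [generatorMap_apply]
    simpa using (totalDegree_eq_zero_iff_eq_C.1 ((totalDegree_zero_iff_isHomogeneous _).2 hm)).symm
  · exact LinearMap.map_le_range ((map_generatorMap_generatorForms hrel hspan m).ge hm)

theorem exists_aeval_mul_mem_range_aeval
    (hspan : Submodule.span k (Set.range (Sum.elim v g)) = homogeneousSubmodule (Fin 2) k d)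
    (hbir : ∀ f ∈ veronese k d, ∃ x ∈ Algebra.adjoin k (Set.range g),
      ∃ y ∈ Algebra.adjoin k (Set.range g), y ≠ 0 ∧ y * f = x) :
    ∃ y : MvPolynomial (Fin 3) k, aeval g y ≠ 0 ∧
      ∀ f ∈ LinearMap.range (generatorMap g v),
        aeval g y * f ∈ (aeval g : MvPolynomial (Fin 3) k →ₐ[k] _).range := by
  simp only [Algebra.adjoin_range_eq_range_aeval] at hbir
  have hv (j) : v j ∈ veronese k d :=
    Algebra.subset_adjoin (isHomogeneous_of_span_eq hspan (.inl j))
  choose x hx y hy hy0 hyx using fun j => hbir (v j) (hv j)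
  choose y' hy' using fun j => (AlgHom.mem_range _).1 (hy j)
  refine ⟨∏ j, y' j, ?_, ?_⟩
  · rw [map_prod, Finset.prod_ne_zero_iff]
    exact fun j _ => (hy' j).symm ▸ hy0 j
  rintro _ ⟨z, rfl⟩
  rw [generatorMap_apply, mul_add, Finset.mul_sum]
  refine add_mem (sum_mem fun j _ => ?_) (mul_mem ⟨_, rfl⟩ ⟨_, rfl⟩)
  classical
  have hj : aeval g (∏ j, y' j) * (aeval g (z.1 j) * v j) =
      aeval g ((∏ i ∈ Finset.univ.erase j, y' i) * z.1 j) * x j := by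
    rw [← Finset.mul_prod_erase _ _ (Finset.mem_univ j), map_mul, map_mul, ← hyx j, ← hy' j]
    ring
  rw [hj]
  exact mul_mem ⟨_, rfl⟩ (hx j)

theorem finrank_map_aeval_add_multichoose_le {σ τ : Type*} [Fintype τ] {g : τ → MvPolynomial σ k}
    {p : MvPolynomial τ k} {e : ℕ} (hp : p.IsHomogeneous e) (hp0 : p ≠ 0) (hgp : aeval g p = 0)
    (m : ℕ) :
    Module.finrank k ((homogeneousSubmodule τ k (e + m)).map (aeval g).toLinearMap) +
      (Fintype.card τ).multichoose m ≤ (Fintype.card τ).multichoose (e + m) := by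
  let φ := (aeval g).toLinearMap.domRestrict (homogeneousSubmodule τ k (e + m))
  have hinj : Function.Injective (formMul (R := k) hp (rfl : e + m = e + m)) := fun q q' h =>
    Subtype.ext (mul_left_cancel₀ hp0 (congrArg Subtype.val h))
  have hker : LinearMap.range (formMul (R := k) hp (rfl : e + m = e + m)) ≤ LinearMap.ker φ := by
    rintro _ ⟨q, rfl⟩
    change aeval g (p * q.1) = 0
    rw [map_mul, hgp, zero_mul]
  have hrank := Submodule.finrank_mono hker
  rw [LinearMap.finrank_range_of_inj hinj, finrank_homogeneousSubmodule] at hrank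
  rw [← LinearMap.range_domRestrict, ← finrank_homogeneousSubmodule τ k (e + m),
    ← LinearMap.finrank_range_add_finrank_ker φ]
  exact Nat.add_le_add_left hrank _

theorem exists_span_eq_homogeneousSubmodule (hg : ∀ i, (g i).IsHomogeneous d) :
    ∃ v : Fin (d + 1) → MvPolynomial (Fin 2) k,
      Submodule.span k (Set.range (Sum.elim v g)) = homogeneousSubmodule (Fin 2) k d := by
  let b := Module.finBasisOfFinrankEq k (homogeneousSubmodule (Fin 2) k d)
    (finrank_homogeneousSubmodule_fin_two d)
  refine ⟨fun j => b j, ?_⟩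
  have hb : Submodule.span k (Set.range fun j => (b j : MvPolynomial (Fin 2) k)) =
      homogeneousSubmodule (Fin 2) k d := by
    have := congrArg (Submodule.map (homogeneousSubmodule (Fin 2) k d).subtype) b.span_eq
    rwa [Submodule.map_span, ← Set.range_comp, Submodule.map_subtype_top] at this
  rw [Set.Sum.elim_range, Submodule.span_union, hb, sup_eq_left, Submodule.span_le]
  rintro _ ⟨i, rfl⟩
  exact hg i

theorem exists_aeval_mul_mem_map_aeval (hg : ∀ i, (g i).IsHomogeneous d) (hd : d ≠ 0)
    (hrel : IsRelPrimeFamily g)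
    (hbir : ∀ f ∈ veronese k d, ∃ x ∈ Algebra.adjoin k (Set.range g),
      ∃ y ∈ Algebra.adjoin k (Set.range g), y ≠ 0 ∧ y * f = x) :
    ∃ (c : ℕ) (y : MvPolynomial (Fin 3) k), aeval g y ≠ 0 ∧
      ∀ m, ∀ f : MvPolynomial (Fin 2) k, f.IsHomogeneous (d * (m + 1)) →
        aeval g y * f ∈ (homogeneousSubmodule (Fin 3) k (c + (m + 1))).map
          (aeval g).toLinearMap := by
  obtain ⟨v, hspan⟩ := exists_span_eq_homogeneousSubmodule hg
  obtain ⟨y, hy0, hy⟩ := exists_aeval_mul_mem_range_aeval hspan hbir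
  obtain ⟨c, hc⟩ : ∃ c, aeval g (homogeneousComponent c y) ≠ 0 := by
    by_contra! h
    rw [← sum_homogeneousComponent y, map_sum] at hy0
    exact hy0 (Finset.sum_eq_zero fun c _ => h c)
  refine ⟨c, homogeneousComponent c y, hc, fun m f hf => ?_⟩
  obtain ⟨x, hx⟩ := (AlgHom.mem_range _).1 (hy f (LinearMap.map_le_range
    ((map_generatorMap_generatorForms hrel hspan m).ge hf)))
  refine ⟨homogeneousComponent (c + (m + 1)) x, homogeneousComponent_isHomogeneous _ _, ?_⟩
  have hcomp := congrArg (homogeneousComponent (d * (c + (m + 1)))) hx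
  rw [mul_comm _ f, mul_add d c, homogeneousComponent_add_mul hf, ← mul_add,
    homogeneousComponent_aeval hg hd] at hcomp
  rw [mul_comm _ f, ← homogeneousComponent_aeval hg hd y c]
  rw [homogeneousComponent_aeval hg hd] at hcomp ⊢
  exact hcomp

/- A linear relation between the `g i` would bound the dimension of the forms of degree `m` in `g`
by `m + 1`, while a common denominator makes it grow at least like `d * m`. -/
theorem linearIndependent_of_birational (hg : ∀ i, (g i).IsHomogeneous d) (hd : 2 ≤ d)
    (hrel : IsRelPrimeFamily g)
    (hbir : ∀ f ∈ veronese k d, ∃ x ∈ Algebra.adjoin k (Set.range g),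
      ∃ y ∈ Algebra.adjoin k (Set.range g), y ≠ 0 ∧ y * f = x) :
    LinearIndependent k g := by
  refine Fintype.linearIndependent_iff.2 fun a ha => ?_
  by_contra hne
  obtain ⟨c, y, hy0, hy⟩ := exists_aeval_mul_mem_map_aeval hg (by omega) hrel hbir
  have hl : (∑ i, C (a i) * X i : MvPolynomial (Fin 3) k).IsHomogeneous 1 :=
    IsHomogeneous.sum _ _ _ fun i _ => isHomogeneous_C_mul_X _ _
  have hl0 : (∑ i, C (a i) * X i : MvPolynomial (Fin 3) k) ≠ 0 := fun h0 => hne fun i => by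
    simpa [coeff_sum, coeff_C_mul, coeff_X, Finsupp.single_left_inj] using
      congrArg (coeff (Finsupp.single i 1)) h0
  have hupper := finrank_map_aeval_add_multichoose_le (g := g) hl hl0
    (by simpa [Algebra.smul_def] using ha) (2 * c)
  let φ : homogeneousSubmodule (Fin 2) k (d * (c + 1)) →ₗ[k]
      (homogeneousSubmodule (Fin 3) k (c + (c + 1))).map (aeval g).toLinearMap :=
    (LinearMap.mulLeft k (aeval g y)).restrict fun f hf => hy c f hf
  have hlower := LinearMap.finrank_le_finrank_of_injective (f := φ) fun f f' h =>
    Subtype.ext (mul_left_cancel₀ hy0 (congrArg Subtype.val h))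
  rw [finrank_homogeneousSubmodule_fin_two, (by ring : c + (c + 1) = 1 + 2 * c)] at hlower
  rw [Fintype.card_fin, add_comm 1 (2 * c), Nat.multichoose_succ_succ, Nat.multichoose_two]
    at hupper
  rw [add_comm 1] at hlower
  nlinarith

end Birational

section Presentation

theorem exists_linearIndependent_sumElim {K V ι : Type*} [DivisionRing K] [AddCommGroup V]
    [Module K V] [Module.Finite K V] [Fintype ι] {w : ι → V} {n : ℕ} (hw : LinearIndependent K w)
    (hn : Module.finrank K V = n + Fintype.card ι) :
    ∃ v : Fin n → V, LinearIndependent K (Sum.elim v w) := by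
  obtain ⟨U, hU⟩ := (Submodule.span K (Set.range w)).exists_isCompl
  have hrank := Submodule.finrank_add_eq_of_isCompl hU
  rw [finrank_span_eq_card hw] at hrank
  let b := Module.finBasisOfFinrankEq K U (by omega : Module.finrank K U = n)
  refine ⟨fun j => b j,
    (b.linearIndependent.map' U.subtype U.ker_subtype).sum_type hw (hU.disjoint.symm.mono_left ?_)⟩
  rw [Submodule.span_le]
  rintro _ ⟨j, rfl⟩
  exact (b j).2

variable {k : Type*} [Field k] {g : Fin 3 → MvPolynomial (Fin 2) k} {n d : ℕ}

theorem exists_linearIndependent_span_eq_homogeneousSubmodule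
    (hg : ∀ i, (g i).IsHomogeneous (n + 2)) (hli : LinearIndependent k g) :
    ∃ v : Fin n → MvPolynomial (Fin 2) k, LinearIndependent k (Sum.elim v g) ∧
      Submodule.span k (Set.range (Sum.elim v g)) = homogeneousSubmodule (Fin 2) k (n + 2) := by
  let w (i : Fin 3) : homogeneousSubmodule (Fin 2) k (n + 2) := ⟨g i, hg i⟩
  have hw : LinearIndependent k w := LinearIndependent.of_comp (Submodule.subtype _) hli
  have hrank := finrank_homogeneousSubmodule_fin_two (k := k) (n + 2)
  obtain ⟨v, hv⟩ := exists_linearIndependent_sumElim hw hrank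
  have helim : Sum.elim (fun j => (v j : MvPolynomial (Fin 2) k)) g =
      (homogeneousSubmodule (Fin 2) k (n + 2)).subtype ∘ Sum.elim v w :=
    by rw [Sum.comp_elim]; rfl
  refine ⟨fun j => v j, ?_, ?_⟩ <;> rw [helim]
  · exact hv.map' _ (Submodule.ker_subtype _)
  · rw [Set.range_comp, ← Submodule.map_span,
      hv.span_eq_top_of_card_eq_finrank' (by simpa using hrank.symm), Submodule.map_subtype_top]

/-- The `k[T₁, T₂, T₃]`-algebra structure `Tᵢ ↦ gᵢ` on the Veronese ring. -/
noncomputable abbrev veroneseAlgebra (hg : ∀ i, (g i).IsHomogeneous d) :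
    Algebra (MvPolynomial (Fin 3) k) (veronese k d) :=
  ((aeval fun i : Fin 3 =>
    (⟨g i, Algebra.subset_adjoin (hg i)⟩ : veronese k d)).toRingHom).toAlgebra

theorem coe_algebraMap_veronese (hg : ∀ i, (g i).IsHomogeneous d) (t : MvPolynomial (Fin 3) k) :
    letI := veroneseAlgebra hg
    (algebraMap (MvPolynomial (Fin 3) k) (veronese k d) t : MvPolynomial (Fin 2) k) =
      aeval g t :=
  comp_aeval_apply _ (veronese k d).val t

theorem coe_smul_veronese (hg : ∀ i, (g i).IsHomogeneous d) (t : MvPolynomial (Fin 3) k)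
    (w : veronese k d) :
    letI := veroneseAlgebra hg
    ((t • w : veronese k d) : MvPolynomial (Fin 2) k) = aeval g t * w := by
  let := veroneseAlgebra hg
  rw [Algebra.smul_def, ← coe_algebraMap_veronese hg]
  rfl

theorem mem_range_linearMap_veronese (hg : ∀ i, (g i).IsHomogeneous d) (w : veronese k d) :
    letI := veroneseAlgebra hg
    w ∈ LinearMap.range (Algebra.linearMap (MvPolynomial (Fin 3) k) (veronese k d)) ↔
      (w : MvPolynomial (Fin 2) k) ∈ (aeval g : MvPolynomial (Fin 3) k →ₐ[k] _).range := by
  let := veroneseAlgebra hg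
  refine exists_congr fun t => ?_
  rw [Subtype.ext_iff, Algebra.linearMap_apply, coe_algebraMap_veronese hg]
  rfl

/-- The `k[T₁, T₂, T₃]`-module `V/A`, with `V` the Veronese ring and `A = k[g₁, g₂, g₃]`. -/
abbrev VeroneseQuotient (hg : ∀ i, (g i).IsHomogeneous d) : Type _ :=
  letI := veroneseAlgebra hg
  veronese k d ⧸ LinearMap.range (Algebra.linearMap (MvPolynomial (Fin 3) k) (veronese k d))

theorem mem_annihilator_veroneseQuotient (hg : ∀ i, (g i).IsHomogeneous d)
    {t : MvPolynomial (Fin 3) k} (ht : ∀ f ∈ veronese k d,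
      aeval g t * f ∈ (aeval g : MvPolynomial (Fin 3) k →ₐ[k] _).range) :
    letI := veroneseAlgebra hg
    t ∈ Module.annihilator (MvPolynomial (Fin 3) k) (VeroneseQuotient hg) := by
  let := veroneseAlgebra hg
  refine Module.mem_annihilator.2 fun m => ?_
  obtain ⟨w, rfl⟩ := Submodule.Quotient.mk_surjective _ m
  rw [← Submodule.Quotient.mk_smul, Submodule.Quotient.mk_eq_zero, mem_range_linearMap_veronese,
    coe_smul_veronese]
  exact ht w w.2

/- `f` is the implicit equation of the curve and `y` a common denominator of `V` over `A`. -/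
theorem exists_prime_not_dvd_mem_annihilator {ι : Type*} [Finite ι]
    {v : ι → MvPolynomial (Fin 2) k} (hg : ∀ i, (g i).IsHomogeneous d) (hrel : IsRelPrimeFamily g)
    (hspan : Submodule.span k (Set.range (Sum.elim v g)) = homogeneousSubmodule (Fin 2) k d)
    (hbir : ∀ f ∈ veronese k d, ∃ x ∈ Algebra.adjoin k (Set.range g),
      ∃ y ∈ Algebra.adjoin k (Set.range g), y ≠ 0 ∧ y * f = x) :
    letI := veroneseAlgebra hg
    ∃ f y, Prime f ∧ ¬f ∣ y ∧
      f ∈ Module.annihilator (MvPolynomial (Fin 3) k) (VeroneseQuotient hg) ∧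
      y ∈ Module.annihilator (MvPolynomial (Fin 3) k) (VeroneseQuotient hg) := by
  cases nonempty_fintype ι
  obtain ⟨f, hf, hf0⟩ := exists_prime_aeval_eq_zero (by simp) g
  obtain ⟨y, hy0, hy⟩ := exists_aeval_mul_mem_range_aeval hspan hbir
  refine ⟨f, y, hf, ?_, mem_annihilator_veroneseQuotient hg fun w _ => ?_,
    mem_annihilator_veroneseQuotient hg fun w hw =>
      hy w (mem_range_generatorMap_of_mem_veronese hrel hspan hw)⟩
  · rintro ⟨c, rfl⟩
    exact hy0 (by rw [map_mul, hf0, zero_mul])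
  · rw [hf0, zero_mul]
    exact zero_mem _

theorem nonempty_veroneseQuotient_equiv (hg : ∀ i, (g i).IsHomogeneous d)
    {ι κ : Type*} [Fintype ι] [Fintype κ] {v : ι → MvPolynomial (Fin 2) k}
    {P : Matrix ι κ (MvPolynomial (Fin 3) k)} (hrel : IsRelPrimeFamily g)
    (hspan : Submodule.span k (Set.range (Sum.elim v g)) = homogeneousSubmodule (Fin 2) k d)
    (hP : ∀ p, p ∈ LinearMap.range P.mulVecLin ↔ ∃ q, generatorMap g v (p, q) = 0) :
    letI := veroneseAlgebra hg
    Nonempty (VeroneseQuotient hg ≃ₗ[MvPolynomial (Fin 3) k]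
      ((ι → MvPolynomial (Fin 3) k) ⧸ LinearMap.range P.mulVecLin)) := by
  let := veroneseAlgebra hg
  let v' (j : ι) : veronese k d :=
    ⟨v j, Algebra.subset_adjoin (isHomogeneous_of_span_eq hspan (.inl j))⟩
  let φ := Fintype.linearCombination (MvPolynomial (Fin 3) k) v'
  have hφ (p : ι → MvPolynomial (Fin 3) k) (q) :
      (φ p : MvPolynomial (Fin 2) k) = generatorMap g v (p, q) - aeval g q := by
    rw [generatorMap_apply, add_sub_cancel_right, Fintype.linearCombination_apply,
      AddSubmonoidClass.coe_finsetSum]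
    exact Finset.sum_congr rfl fun j _ => coe_smul_veronese hg _ _
  let ψ := (LinearMap.range
    (Algebra.linearMap (MvPolynomial (Fin 3) k) (veronese k d))).mkQ ∘ₗ φ
  have hsurj : Function.Surjective ψ := by
    intro m
    obtain ⟨w, rfl⟩ := Submodule.Quotient.mk_surjective _ m
    obtain ⟨⟨p, q⟩, hpq⟩ := mem_range_generatorMap_of_mem_veronese hrel hspan w.2
    refine ⟨p, (Submodule.Quotient.eq _).2 ((mem_range_linearMap_veronese hg _).2 ⟨-q, ?_⟩)⟩
    rw [Subalgebra.coe_sub, hφ p q, hpq]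
    simp
  have hker : LinearMap.ker ψ = LinearMap.range P.mulVecLin := by
    ext p
    rw [hP, LinearMap.mem_ker, LinearMap.comp_apply, Submodule.mkQ_apply,
      Submodule.Quotient.mk_eq_zero, mem_range_linearMap_veronese]
    refine (Equiv.neg _).exists_congr fun q => ?_
    change aeval g q = _ ↔ generatorMap g v (p, -q) = 0
    rw [hφ p (-q), map_neg, sub_neg_eq_add, right_eq_add]
  exact ⟨((Submodule.quotEquivOfEq _ _ hker).symm.trans
    (ψ.quotKerEquivOfSurjective hsurj)).symm⟩

end Presentation

/-- Let `k` be a field, `B = k[x,y]`, `d ≥ 3`, and `g = (g₁,g₂,g₃)` a triple of degree-`d` forms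
such that the ideal `(g₁,g₂,g₃)B` has height `2` and the inclusion `A = k[g₁,g₂,g₃] ⊆ V` (the
`d`-th Veronese subring of `B`) is birational.  Let `c = A : V` be the conductor and `L` its
preimage in `T = k[T₁,T₂,T₃]` (equivalently, `L` is the annihilator of the `T`-module `V/A`,
where `T` acts through `Tᵢ ↦ gᵢ`).  Then the homogeneous minimal free `T`-resolution of `T/L`
has the form `0 → T^{d-2}(−d+1) → T^{d-1}(−d+2) → T → T/L → 0`: `L` is generated by `d−1` forms
of degree `d−2` whose syzygy module is free on `d−2` generators, with a presentation matrix `ψ`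
of linear forms.  In particular `T/L` is Cohen–Macaulay of dimension `1`, and the canonical
module `ω_{T/L}` — the cokernel of the transposed map `(T^{d-1})^* → (T^{d-2})^*` — is
isomorphic to `V/A`. -/
theorem stmt15 {k : Type*} [Field k] (d : ℕ) (hd : 3 ≤ d)
    (g : Fin 3 → MvPolynomial (Fin 2) k) (hg : ∀ i, (g i).IsHomogeneous d)
    (hht : idealHeight (Ideal.span (Set.range g)) = 2)
    (hbir : ∀ v ∈ veronese k d,
      ∃ x ∈ Algebra.adjoin k (Set.range g), ∃ y ∈ Algebra.adjoin k (Set.range g),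
        y ≠ 0 ∧ y * v = x) :
    -- `T = k[T₁,T₂,T₃]` acts on `V` through `Tᵢ ↦ gᵢ`
    letI : Algebra (MvPolynomial (Fin 3) k) (veronese k d) :=
      ((aeval fun i : Fin 3 =>
        (⟨g i, Algebra.subset_adjoin (hg i)⟩ : veronese k d)).toRingHom).toAlgebra
    -- the `T`-module `V/A`
    let M := (veronese k d) ⧸
      LinearMap.range (Algebra.linearMap (MvPolynomial (Fin 3) k) (veronese k d))
    -- the preimage `L` of the conductor `c = A : V` in `T`
    let L : Ideal (MvPolynomial (Fin 3) k) := Module.annihilator (MvPolynomial (Fin 3) k) M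
    ∃ (gens : Fin (d - 1) → MvPolynomial (Fin 3) k)
      (ψ : Matrix (Fin (d - 1)) (Fin (d - 2)) (MvPolynomial (Fin 3) k)),
      -- `L` is generated by `d − 1` forms of degree `d − 2` ...
      (∀ i, (gens i).IsHomogeneous (d - 2)) ∧
      L = Ideal.span (Set.range gens) ∧
      -- ... whose relations are given by a matrix of linear forms ...
      (∀ i j, (ψ i j).IsHomogeneous 1) ∧
      Function.Injective ψ.mulVecLin ∧
      LinearMap.range ψ.mulVecLin =
        LinearMap.ker (Matrix.mulVecLin
          (Matrix.of fun (_ : Fin 1) (i : Fin (d - 1)) => gens i)) ∧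
      -- the canonical module `ω_{T/L}`, i.e. the cokernel of the transposed map, is `V/A`:
      Nonempty (M ≃ₗ[MvPolynomial (Fin 3) k]
        ((Fin (d - 2) → MvPolynomial (Fin 3) k) ⧸
          LinearMap.range ψ.transpose.mulVecLin)) ∧
      -- `T/L` is one-dimensional ...
      ringKrullDim (MvPolynomial (Fin 3) k ⧸ L) = 1 ∧
      -- ... and Cohen–Macaulay (its maximal homogeneous ideal contains a nonzerodivisor)
      (∃ t ∈ Ideal.span (Set.range (X : Fin 3 → MvPolynomial (Fin 3) k)),
        Ideal.Quotient.mk L t ∈ nonZeroDivisors (MvPolynomial (Fin 3) k ⧸ L)) := by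
  obtain ⟨n, rfl⟩ := Nat.exists_eq_add_of_le' (by omega : 2 ≤ d)
  have hrel : IsRelPrimeFamily g := isRelPrimeFamily_of_one_lt_idealHeight (by norm_num [hht])
  have hli := linearIndependent_of_birational hg (by omega) hrel hbir
  obtain ⟨v, hvli, hspan⟩ := exists_linearIndependent_span_eq_homogeneousSubmodule hg hli
  obtain ⟨P, hlin, hrange⟩ := exists_matrix_mem_range_mulVecLin_iff hrel hspan hvli
  obtain ⟨e⟩ := nonempty_veroneseQuotient_equiv hg hrel hspan hrange
  obtain ⟨f, y, hf, hfy, hfL, hyL⟩ := exists_prime_not_dvd_mem_annihilator hg hrel hspan hbir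
  rw [e.annihilator_eq] at hfL hyL
  intro M L
  rw [show L = Module.annihilator _ _ from e.annihilator_eq]
  have hminor : IsRelPrimeFamily (signedMinor P) := isRelPrimeFamily_signedMinor fun p hp =>
    hf.irreducible.isRelPrime_iff_not_dvd.2 hfy (hp ⟨f, hfL⟩) (hp ⟨y, hyL⟩)
  obtain ⟨i, hi⟩ := hminor.exists_ne_zero
  exact ⟨signedMinor P, P.transpose, isHomogeneous_signedMinor hlin,
    annihilator_eq_span_signedMinor hminor, fun i j => hlin j i, injective_transpose_mulVecLin hi,
    range_transpose_mulVecLin_eq_ker hminor, ⟨e⟩,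
    ringKrullDim_quotient_annihilator_eq_one (by omega) hlin hminor hf hfL hyL hfy,
    exists_mem_span_range_X_mk_mem_nonZeroDivisors hminor⟩
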